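/- Let φ be a pair potential satisfying conditions (I) and (S), and let μ ∈ M¹_fm(Γ) be such that the correlation measure ρ_μ is absolutely continuous with respect to the Lebesgue-Poisson measure λ_z and the correlation function k_μ satisfies the Ruelle bound for some C > 0. Then Ĥ(B_bs(Γ₀)) ⊂ L¹(Γ₀, ρ_μ), and consequently the Glauber generator H maps FP_bc(Γ) into L¹(Γ, μ). -/

import Mathlib

open MeasureTheory
open scoped BigOperators ENNReal Classical

noncomputable section

/-- The one-particle space `ℝ^d`. -/
abbrev Rd (d : ℕ) : Type := Fin d → ℝ

/-- The configuration space `Γ`: all locally finite subsets of `ℝ^d`. -/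
def Config (d : ℕ) : Type :=
  {γ : Set (Rd d) // ∀ K : Set (Rd d), IsCompact K → (γ ∩ K).Finite}

variable {d : ℕ}

namespace Config

/-- `γ ∪ {x}`. -/
def insertPt (γ : Config d) (x : Rd d) : Config d :=
  ⟨insert x γ.1, fun K hK => ((γ.2 K hK).insert x).subset (by
      rintro y ⟨hy, hyK⟩
      rcases Set.mem_insert_iff.mp hy with h | h
      · exact Set.mem_insert_iff.mpr (Or.inl h)
      · exact Set.mem_insert_iff.mpr (Or.inr ⟨h, hyK⟩))⟩

/-- `γ ∖ {x}`. -/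
def erasePt (γ : Config d) (x : Rd d) : Config d :=
  ⟨γ.1 \ {x}, fun K hK => (γ.2 K hK).subset (fun _ hy => ⟨hy.1.1, hy.2⟩)⟩

/-- A finite configuration, viewed as an element of `Γ`. -/
def ofFinset (η : Finset (Rd d)) : Config d :=
  ⟨(η : Set (Rd d)), fun _ _ => η.finite_toSet.subset Set.inter_subset_left⟩

/-- The local restriction `γ_Λ := γ ∩ Λ`. -/
def restrict (γ : Config d) (Λ : Set (Rd d)) : Config d :=
  ⟨γ.1 ∩ Λ, fun K hK => (γ.2 K hK).subset (fun _ hy => ⟨hy.1.1, hy.2⟩)⟩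

end Config

/-- The σ-algebra on the space `Γ₀` of finite configurations, generated by the
counting maps `η ↦ |η ∩ A|`, `A` measurable. -/
instance : MeasurableSpace (Finset (Rd d)) :=
  MeasurableSpace.generateFrom
    {S | ∃ (A : Set (Rd d)) (n : ℕ), MeasurableSet A ∧
      S = {η : Finset (Rd d) | ((η : Set (Rd d)) ∩ A).ncard = n}}

/-- The Borel σ-algebra on `Γ`, generated by the counting maps `γ ↦ |γ ∩ A|`. -/
instance : MeasurableSpace (Config d) :=
  MeasurableSpace.generateFrom
    {S | ∃ (A : Set (Rd d)) (n : ℕ), MeasurableSet A ∧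
      S = {γ : Config d | (γ.1 ∩ A).ncard = n}}

/-- The Lebesgue–Poisson measure `λ_z = Σ_n (zⁿ/n!) m⁽ⁿ⁾` on `Γ₀`, where `m⁽ⁿ⁾` is the
image of Lebesgue measure on `(ℝ^d)ⁿ` under `(x₁,…,xₙ) ↦ {x₁,…,xₙ}`. -/
def lambdaLP (d : ℕ) (z : ℝ) : Measure (Finset (Rd d)) :=
  Measure.sum fun n : ℕ =>
    (ENNReal.ofReal (z ^ n / n.factorial)) •
      Measure.map (fun x : Fin n → Rd d => Finset.image x Finset.univ) volume

/-- The `⋆`-convolution `(G₁ ⋆ G₂)(η) = Σ_{(η₁,η₂,η₃)∈P₃(η)} G₁(η₁∪η₂) G₂(η₂∪η₃)`,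
the sum running over all ordered partitions of `η` into three (possibly empty) parts. -/
def starConv {M : Type*} [NonUnitalNonAssocSemiring M]
    (G₁ G₂ : Finset (Rd d) → M) (η : Finset (Rd d)) : M :=
  ∑ η₁ ∈ η.powerset, ∑ η₂ ∈ (η \ η₁).powerset,
    G₁ (η₁ ∪ η₂) * G₂ (η₂ ∪ ((η \ η₁) \ η₂))

/-- The `K`-transform `(KG)(γ) = Σ_{η ⋐ γ} G(η)`. -/
def Ktrans {M : Type*} [AddCommMonoid M] [TopologicalSpace M]
    (G : Finset (Rd d) → M) (γ : Config d) : M :=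
  ∑' η : {η : Finset (Rd d) // (η : Set (Rd d)) ⊆ γ.1}, G η.1

/-- `B_bs(Γ₀)`: bounded measurable functions on `Γ₀` with bounded support. -/
def BddSupp (G : Finset (Rd d) → ℝ) : Prop :=
  Measurable G ∧ ∃ (L : ℝ) (N : ℕ) (Λ : Set (Rd d)), IsCompact Λ ∧
    (∀ η, |G η| ≤ L) ∧
    (∀ η : Finset (Rd d), ¬((η : Set (Rd d)) ⊆ Λ ∧ η.card ≤ N) → G η = 0)

/-- A pair potential `φ : ℝ^d → ℝ ∪ {+∞}`, symmetric and real-valued away from `0`. -/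
structure PairPotential (d : ℕ) where
  toFun : Rd d → EReal
  measurable' : Measurable toFun
  symm' : ∀ x, toFun (-x) = toFun x
  finite_off_zero' : ∀ x, x ≠ 0 → toFun x ≠ ⊤
  ne_bot' : ∀ x, toFun x ≠ ⊥

/-- `e^{-a}` for `a ∈ ℝ ∪ {+∞}`, with `e^{-∞} := 0`. -/
def expNegE (a : EReal) : ℝ :=
  if a = ⊤ then 0 else Real.exp (-a.toReal)

/-- The energy `E(η) = Σ_{{x,y}⊂η} φ(x-y)` of a finite configuration. -/
def pairEnergy (V : PairPotential d) (η : Finset (Rd d)) : ℝ :=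
  (1 / 2) * ∑ x ∈ η, ∑ y ∈ η.erase x, (V.toFun (x - y)).toReal

/-- Stability (S): `E(η) ≥ -B|η|` for all finite configurations `η`. -/
def Stable (V : PairPotential d) (B : ℝ) : Prop :=
  0 ≤ B ∧ ∀ η : Finset (Rd d), -B * η.card ≤ pairEnergy V η

/-- Integrability (I): `∫ |1 - e^{-φ(x)}| dx < ∞`. -/
def CondI (V : PairPotential d) : Prop :=
  ∫⁻ x : Rd d, ENNReal.ofReal |1 - expNegE (V.toFun x)| < ⊤

/-- Lower regularity (LR): the interaction energy between two disjoint finite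
configurations is bounded below by `-Σ a(x-y)` for some nonnegative integrable `a`. -/
def LowerRegular (V : PairPotential d) : Prop :=
  ∃ a : Rd d → ℝ, Measurable a ∧ (∀ x, 0 ≤ a x) ∧
    (∫⁻ x : Rd d, ENNReal.ofReal (a x) < ⊤) ∧
    ∀ η₁ η₂ : Finset (Rd d), Disjoint η₁ η₂ →
      -(∑ x ∈ η₁, ∑ y ∈ η₂, a (x - y)) ≤ ∑ x ∈ η₁, ∑ y ∈ η₂, (V.toFun (x - y)).toReal

/-- The relative energy `E(x,η) = Σ_{y∈η} φ(x-y)` of a point w.r.t. a finite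
configuration, with values in `ℝ ∪ {±∞}`. -/
def relEnergyF (V : PairPotential d) (x : Rd d) (η : Finset (Rd d)) : EReal :=
  ∑ y ∈ η, V.toFun (x - y)

/-- `e^{-E(x,γ)}` for a general (possibly infinite) configuration `γ`: if the series
`Σ_{y∈γ} φ(x-y)` is (absolutely) convergent this is the exponential of minus its sum,
and otherwise `E(x,γ) := +∞`, i.e. `e^{-E(x,γ)} := 0`. -/
def expNegRelEnergy (V : PairPotential d) (x : Rd d) (γ : Set (Rd d)) : ℝ :=
  if (∀ y ∈ γ, V.toFun (x - y) ≠ ⊤) ∧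
      Summable (fun y : γ => |(V.toFun (x - (y : Rd d))).toReal|)
  then Real.exp (-∑' y : γ, (V.toFun (x - (y : Rd d))).toReal)
  else 0

/-- The Glauber generator:
`(HF)(γ) = -Σ_{x∈γ}(F(γ∖{x})-F(γ)) - z ∫ e^{-E(x,γ)} (F(γ∪{x})-F(γ)) dx`. -/
def glauber (V : PairPotential d) (z : ℝ) (F : Config d → ℝ) (γ : Config d) : ℝ :=
  -((∑' x : γ.1, (F (γ.erasePt x) - F γ)) +
    z * ∫ x : Rd d, expNegRelEnergy V x γ.1 * (F (γ.insertPt x) - F γ))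

/-- `Ĥ := K⁻¹ H K` on quasi-observables, via `(K⁻¹F)(η) = Σ_{ξ⊂η} (-1)^{|η∖ξ|} F(ξ)`. -/
def hatH (V : PairPotential d) (z : ℝ) (G : Finset (Rd d) → ℝ)
    (η : Finset (Rd d)) : ℝ :=
  ∑ ξ ∈ η.powerset, (-1 : ℝ) ^ (η.card - ξ.card) *
    glauber V z (Ktrans G) (Config.ofFinset ξ)

/-- `M¹_fm(Γ)`: probability measures on `Γ` with finite local moments of all orders. -/
def HasFiniteLocalMoments (μ : Measure (Config d)) : Prop :=
  IsProbabilityMeasure μ ∧ ∀ (n : ℕ) (Λ : Set (Rd d)), IsCompact Λ →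
    ∫⁻ γ : Config d, ((γ.1 ∩ Λ).ncard : ℝ≥0∞) ^ n ∂μ < ⊤

/-- `ρ = K*μ` is the correlation measure of `μ`:
`∫_{Γ₀} G dρ = ∫_Γ (KG) dμ` for every positive measurable `G` with bounded support. -/
def IsCorrelationMeasure (μ : Measure (Config d)) (ρ : Measure (Finset (Rd d))) : Prop :=
  ∀ G : Finset (Rd d) → ℝ≥0∞, Measurable G →
    (∃ (N : ℕ) (Λ : Set (Rd d)), IsCompact Λ ∧
      ∀ η : Finset (Rd d), ¬((η : Set (Rd d)) ⊆ Λ ∧ η.card ≤ N) → G η = 0) →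
    ∫⁻ η, G η ∂ρ =
      ∫⁻ γ, (∑' η : {η : Finset (Rd d) // (η : Set (Rd d)) ⊆ γ.1}, G η.1) ∂μ

/-- The Georgii–Nguyen–Zessin characterization: `μ` is a Gibbs measure for the pair
potential `φ` and activity `z`. -/
def IsGibbs (V : PairPotential d) (z : ℝ) (μ : Measure (Config d)) : Prop :=
  ∀ H : Rd d → Config d → ℝ≥0∞, Measurable (Function.uncurry H) →
    ∫⁻ γ, ∑' x : γ.1, H x γ ∂μ =
      ENNReal.ofReal z *
        ∫⁻ γ, ∫⁻ x, H x (γ.insertPt x) *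
          ENNReal.ofReal (expNegRelEnergy V x γ.1) ∂(volume : Measure (Rd d)) ∂μ

/-- The Kirkwood–Salsburg equation for a correlation function `k`. -/
def SatisfiesKS (V : PairPotential d) (z : ℝ) (k : Finset (Rd d) → ℝ) : Prop :=
  ∀ᵐ p ∂((lambdaLP d z).prod (volume : Measure (Rd d))),
    k (insert p.2 p.1) =
      expNegE (relEnergyF V p.2 p.1) *
        ∫ ρ, (∏ y ∈ ρ, (expNegE (V.toFun (p.2 - y)) - 1)) * k (p.1 ∪ ρ) ∂(lambdaLP d z)

end


section Enumeration

variable {d : ℕ}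

theorem measurableSet_config_ncard (A : Set (Rd d)) (hA : MeasurableSet A) (n : ℕ) :
    MeasurableSet {γ : Config d | (γ.1 ∩ A).ncard = n} :=
  MeasurableSpace.measurableSet_generateFrom ⟨A, n, hA, rfl⟩

theorem measurable_config_ncard (A : Set (Rd d)) (hA : MeasurableSet A) :
    Measurable (fun γ : Config d => (γ.1 ∩ A).ncard) :=
  measurable_to_countable' fun n => measurableSet_config_ncard A hA n

theorem measurable_finset_ncard (A : Set (Rd d)) (hA : MeasurableSet A) :
    Measurable (fun η : Finset (Rd d) => ((η : Set (Rd d)) ∩ A).ncard) :=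
  measurable_to_countable' fun n =>
    MeasurableSpace.measurableSet_generateFrom ⟨A, n, hA, rfl⟩

theorem measurable_ofFinset : Measurable (Config.ofFinset (d := d)) := by
  refine measurable_generateFrom ?_
  rintro S ⟨A, n, hA, rfl⟩
  exact MeasurableSpace.measurableSet_generateFrom ⟨A, n, hA, rfl⟩

/-- Annuli. -/
def annul (d : ℕ) (j : ℕ) : Set (Rd d) := {x | ⌊‖x‖⌋₊ = j}

theorem measurableSet_annul (j : ℕ) : MeasurableSet (annul d j) := by
  have : Measurable (fun x : Rd d => ⌊‖x‖⌋₊) := Nat.measurable_floor.comp measurable_norm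
  exact this (measurableSet_singleton j)

theorem finite_annul (γ : Config d) (j : ℕ) : (γ.1 ∩ annul d j).Finite := by
  refine (γ.2 (Metric.closedBall 0 (j + 1)) (isCompact_closedBall _ _)).subset ?_
  rintro x ⟨hx, hj⟩
  refine ⟨hx, ?_⟩
  have h := Nat.lt_floor_add_one ‖x‖
  have hj' : ⌊‖x‖⌋₊ = j := hj
  rw [hj'] at h
  simpa using h.le

theorem not_mem_preimage_Iio_self {α : Type*} (e : α → ℝ) (x : α) :
    x ∉ e ⁻¹' Set.Iio (e x) := by simp

theorem exists_rank {α : Type*} (s : Set α) (hs : s.Finite) (e : α → ℝ)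
    (he : Function.Injective e) (i : ℕ) (hi : i < s.ncard) :
    ∃ x ∈ s, (s ∩ e ⁻¹' Set.Iio (e x)).ncard = i := by
  lift s to Finset α using hs
  rw [Set.ncard_coe_finset] at hi
  have hlt : ∀ x ∈ s, ∀ y ∈ s, e x < e y →
      ((s : Set α) ∩ e ⁻¹' Set.Iio (e x)).ncard < ((s : Set α) ∩ e ⁻¹' Set.Iio (e y)).ncard := by
    intro x hx y hy hxy
    refine Set.ncard_lt_ncard ?_ (s.finite_toSet.subset Set.inter_subset_left)
    refine ⟨fun w hw => ⟨hw.1, lt_trans hw.2 hxy⟩, fun h => ?_⟩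
    have := (h ⟨hx, hxy⟩ : x ∈ (s : Set α) ∩ e ⁻¹' Set.Iio (e x)).2
    exact not_mem_preimage_Iio_self e _ this
  have hinj : Set.InjOn (fun x => ((s : Set α) ∩ e ⁻¹' Set.Iio (e x)).ncard) s := by
    intro x hx y hy hxy
    by_contra hne
    rcases lt_or_gt_of_ne (he.ne hne) with h | h
    · exact absurd hxy (hlt x hx y hy h).ne
    · exact absurd hxy (hlt y hy x hx h).ne'
  have himg : s.image (fun x => ((s : Set α) ∩ e ⁻¹' Set.Iio (e x)).ncard) =
      Finset.range s.card := by
    refine Finset.eq_of_subset_of_card_le ?_ ?_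
    · intro n hn
      obtain ⟨x, hx, rfl⟩ := Finset.mem_image.1 hn
      rw [Finset.mem_range, ← Set.ncard_coe_finset s]
      refine Set.ncard_lt_ncard ⟨Set.inter_subset_left, fun h => ?_⟩ s.finite_toSet
      exact not_mem_preimage_Iio_self e _ (h hx).2
    · rw [Finset.card_image_of_injOn hinj, Finset.card_range]
  have : i ∈ s.image (fun x => ((s : Set α) ∩ e ⁻¹' Set.Iio (e x)).ncard) := by
    rw [himg]; exact Finset.mem_range.2 hi
  obtain ⟨x, hx, h⟩ := Finset.mem_image.1 this
  exact ⟨x, hx, h⟩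

theorem exists_enum (d : ℕ) : ∃ (valid : ℕ × ℕ → Set (Config d)) (pt : ℕ × ℕ → Config d → Rd d),
    (∀ i, MeasurableSet (valid i)) ∧ (∀ i, Measurable (pt i)) ∧
    ∀ γ : Config d, Set.BijOn (fun i => pt i γ) {i | γ ∈ valid i} γ.1 := by
  obtain ⟨e, he⟩ := exists_measurableEmbedding_real (Rd d)
  have hinj := he.injective
  let valid : ℕ × ℕ → Set (Config d) := fun i => {γ | i.2 < (γ.1 ∩ annul d i.1).ncard}
  have hex : ∀ (i : ℕ × ℕ) (γ : Config d), γ ∈ valid i → ∃ x, x ∈ γ.1 ∩ annul d i.1 ∧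
      (γ.1 ∩ annul d i.1 ∩ e ⁻¹' Set.Iio (e x)).ncard = i.2 := by
    intro i γ h
    obtain ⟨x, hx, h⟩ := exists_rank _ (finite_annul γ i.1) e hinj i.2 h
    exact ⟨x, hx, h⟩
  let pt : ℕ × ℕ → Config d → Rd d := fun i γ =>
    if h : γ ∈ valid i then Classical.choose (hex i γ h) else 0
  have hpt : ∀ i γ, γ ∈ valid i → pt i γ ∈ γ.1 ∩ annul d i.1 ∧
      (γ.1 ∩ annul d i.1 ∩ e ⁻¹' Set.Iio (e (pt i γ))).ncard = i.2 := by
    intro i γ h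
    have : pt i γ = Classical.choose (hex i γ h) := dif_pos h
    rw [this]
    exact Classical.choose_spec (hex i γ h)
  have hpt0 : ∀ i γ, γ ∉ valid i → pt i γ = 0 := fun i γ h => dif_neg h
  have hvm : ∀ i, MeasurableSet (valid i) := fun i =>
    (measurable_config_ncard _ (measurableSet_annul i.1)) (measurableSet_Ioi (a := i.2))
  have hcl : ∀ i γ t, γ ∈ valid i → (e (pt i γ) ≤ t ↔
      i.2 < (γ.1 ∩ (annul d i.1 ∩ e ⁻¹' Set.Iic t)).ncard) := by
    intro i γ t h
    obtain ⟨h1, h2⟩ := hpt i γ h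
    rw [← Set.inter_assoc]
    have hfin := finite_annul γ i.1
    constructor
    · intro hle
      conv_lhs => rw [← h2]
      refine Set.ncard_lt_ncard ⟨fun w hw => ⟨hw.1, (le_of_lt hw.2).trans hle⟩, fun hh => ?_⟩
        (hfin.subset Set.inter_subset_left)
      exact not_mem_preimage_Iio_self e _ (hh ⟨h1, hle⟩).2
    · intro hlt
      by_contra hc
      push Not at hc
      rw [← h2] at hlt
      refine absurd hlt (not_lt.2 (Set.ncard_le_ncard ?_ (hfin.subset Set.inter_subset_left)))
      exact fun w hw => ⟨hw.1, lt_of_le_of_lt hw.2 hc⟩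
  refine ⟨valid, pt, hvm, ?_, ?_⟩
  · intro i
    rw [← he.measurable_comp_iff]
    refine measurable_of_Iic fun t => ?_
    have : (e ∘ pt i) ⁻¹' Set.Iic t =
        (valid i ∩ {γ | i.2 < (γ.1 ∩ (annul d i.1 ∩ e ⁻¹' Set.Iic t)).ncard}) ∪
        ((valid i)ᶜ ∩ {γ | e 0 ≤ t}) := by
      ext γ
      by_cases h : γ ∈ valid i
      · simp only [Set.mem_preimage, Function.comp_apply, Set.mem_Iic, hcl i γ t h]
        simp [h]
      · simp [h, hpt0 i γ h]
    rw [this]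
    refine MeasurableSet.union ((hvm i).inter ?_) ((hvm i).compl.inter (MeasurableSet.const _))
    exact (measurable_config_ncard _ ((measurableSet_annul i.1).inter
      (he.measurable measurableSet_Iic))) (measurableSet_Ioi (a := i.2))
  · intro γ
    refine ⟨fun i hi => (hpt i γ hi).1.1, ?_, ?_⟩
    · intro i hi j hj hij
      obtain ⟨hi1, hi2⟩ := hpt i γ hi
      obtain ⟨hj1, hj2⟩ := hpt j γ hj
      have hij' : pt i γ = pt j γ := hij
      have h1 : i.1 = j.1 := by
        have a : ⌊‖pt i γ‖⌋₊ = i.1 := hi1.2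
        have b : ⌊‖pt j γ‖⌋₊ = j.1 := hj1.2
        rw [← a, ← b, hij']
      refine Prod.ext h1 ?_
      rw [← hi2, ← hj2, hij', h1]
    · intro x hx
      let j := ⌊‖x‖⌋₊
      have hxj : x ∈ γ.1 ∩ annul d j := ⟨hx, rfl⟩
      let r := (γ.1 ∩ annul d j ∩ e ⁻¹' Set.Iio (e x)).ncard
      have hfin := finite_annul γ j
      have hv : γ ∈ valid (j, r) := by
        change r < _
        refine Set.ncard_lt_ncard ⟨Set.inter_subset_left, fun h => ?_⟩ hfin
        exact not_mem_preimage_Iio_self e _ (h hxj).2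
      refine ⟨(j, r), hv, ?_⟩
      obtain ⟨h1, h2⟩ := hpt (j, r) γ hv
      change pt (j, r) γ = x
      by_contra hne
      rcases lt_or_gt_of_ne (hinj.ne hne) with h | h
      · have : (γ.1 ∩ annul d j ∩ e ⁻¹' Set.Iio (e (pt (j, r) γ))).ncard < r :=
          Set.ncard_lt_ncard ⟨fun w hw => ⟨hw.1, lt_trans hw.2 h⟩,
            fun hh => not_mem_preimage_Iio_self e _ (hh ⟨h1, h⟩).2⟩ (hfin.subset Set.inter_subset_left)
        exact this.ne h2
      · have : r < (γ.1 ∩ annul d j ∩ e ⁻¹' Set.Iio (e (pt (j, r) γ))).ncard :=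
          Set.ncard_lt_ncard ⟨fun w hw => ⟨hw.1, lt_trans hw.2 h⟩,
            fun hh => not_mem_preimage_Iio_self e _ (hh ⟨hxj, h⟩).2⟩ (hfin.subset Set.inter_subset_left)
        exact this.ne h2.symm

/-- Validity domain of the enumeration index. -/
noncomputable def eValid (d : ℕ) : ℕ × ℕ → Set (Config d) := (exists_enum d).choose

/-- Measurable enumeration of the points. -/
noncomputable def ePt (d : ℕ) : ℕ × ℕ → Config d → Rd d := (exists_enum d).choose_spec.choose

theorem measurableSet_eValid (i : ℕ × ℕ) : MeasurableSet (eValid d i) :=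
  (exists_enum d).choose_spec.choose_spec.1 i

theorem measurable_ePt (i : ℕ × ℕ) : Measurable (ePt d i) :=
  (exists_enum d).choose_spec.choose_spec.2.1 i

theorem bijOn_ePt (γ : Config d) : Set.BijOn (fun i => ePt d i γ) {i | γ ∈ eValid d i} γ.1 :=
  (exists_enum d).choose_spec.choose_spec.2.2 γ

theorem tsum_points {M : Type*} [AddCommMonoid M] [TopologicalSpace M] (γ : Config d)
    (h : Rd d → M) :
    ∑' y : γ.1, h y = ∑' i : ℕ × ℕ, if γ ∈ eValid d i then h (ePt d i γ) else 0 := by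
  have e := (bijOn_ePt γ).equiv
  rw [← ((bijOn_ePt γ).equiv).tsum_eq (fun y : γ.1 => h y)]
  rw [show (fun i : ℕ × ℕ => if γ ∈ eValid d i then h (ePt d i γ) else 0) =
    Set.indicator {i | γ ∈ eValid d i} (fun i => h (ePt d i γ)) from ?_]
  · rw [← tsum_subtype]; rfl
  · ext i; simp [Set.indicator]

theorem tsum_finsets {M : Type*} [AddCommMonoid M] [TopologicalSpace M] (γ : Config d)
    (G : Finset (Rd d) → M) :
    ∑' η : {η : Finset (Rd d) // (η : Set (Rd d)) ⊆ γ.1}, G η.1 =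
      ∑' I : Finset (ℕ × ℕ), if (∀ i ∈ I, γ ∈ eValid d i) then
        G (I.image (fun i => ePt d i γ)) else 0 := by
  have hb := bijOn_ePt γ
  let S : Set (Finset (ℕ × ℕ)) := {I | ∀ i ∈ I, γ ∈ eValid d i}
  let f : S → {η : Finset (Rd d) // (η : Set (Rd d)) ⊆ γ.1} := fun I =>
    ⟨I.1.image (fun i => ePt d i γ), by
      intro x hx
      obtain ⟨i, hi, rfl⟩ := Finset.mem_image.1 (Finset.mem_coe.1 hx)
      exact hb.mapsTo (I.2 i hi)⟩
  have hf : Function.Bijective f := by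
    constructor
    · intro I J hIJ
      have h : I.1.image (fun i => ePt d i γ) = J.1.image (fun i => ePt d i γ) :=
        congrArg Subtype.val hIJ
      apply Subtype.ext
      have h' := congrArg (fun s : Finset (Rd d) => (s : Set (Rd d))) h
      simp only [Finset.coe_image] at h'
      exact Finset.coe_injective ((hb.injOn.image_eq_image_iff I.2 J.2).1 h')
    · rintro ⟨η, hη⟩
      obtain ⟨T, hT, hTη⟩ := (Set.SurjOn.mono subset_rfl hη hb.surjOn).exists_bijOn_subset
      have hTf : T.Finite := by
        refine Set.Finite.of_finite_image ?_ hTη.injOn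
        rw [hTη.image_eq]; exact η.finite_toSet
      refine ⟨⟨hTf.toFinset, fun i hi => hT (hTf.mem_toFinset.1 hi)⟩, ?_⟩
      apply Subtype.ext
      apply Finset.coe_injective
      simp only [f, Finset.coe_image, Set.Finite.coe_toFinset]
      exact hTη.image_eq
  rw [← (Equiv.ofBijective f hf).tsum_eq
    (fun η : {η : Finset (Rd d) // (η : Set (Rd d)) ⊆ γ.1} => G η.1)]
  rw [show (fun I : Finset (ℕ × ℕ) => if (∀ i ∈ I, γ ∈ eValid d i) then
        G (I.image (fun i => ePt d i γ)) else 0) =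
    Set.indicator S (fun I => G (I.image (fun i => ePt d i γ))) from ?_]
  · rw [← tsum_subtype]; rfl
  · ext i; simp [Set.indicator, S]

theorem measurableSet_mem_config :
    MeasurableSet {p : Rd d × Config d | p.1 ∈ p.2.1} := by
  have : {p : Rd d × Config d | p.1 ∈ p.2.1} =
      ⋃ i, {p | p.2 ∈ eValid d i ∧ ePt d i p.2 = p.1} := by
    ext ⟨x, γ⟩
    simp only [Set.mem_ofPred_eq, Set.mem_iUnion]
    rw [← (bijOn_ePt γ).image_eq]
    rfl
  rw [this]
  refine MeasurableSet.iUnion fun i => ?_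
  exact (measurable_snd (measurableSet_eValid i)).inter
    (measurableSet_eq_fun ((measurable_ePt i).comp measurable_snd) measurable_fst)

theorem measurable_finset_insert :
    Measurable (fun p : Rd d × Finset (Rd d) => insert p.1 p.2) := by
  refine measurable_generateFrom ?_
  rintro S ⟨A, n, hA, rfl⟩
  have hm : MeasurableSet {p : Rd d × Finset (Rd d) | p.1 ∈ p.2} := by
    have := (measurable_fst.prodMk (measurable_ofFinset.comp measurable_snd) :
      Measurable (fun p : Rd d × Finset (Rd d) => (p.1, Config.ofFinset p.2)))
      measurableSet_mem_config
    exact this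
  have hA' : MeasurableSet {p : Rd d × Finset (Rd d) | p.1 ∈ A} := measurable_fst hA
  have hc : Measurable (fun p : Rd d × Finset (Rd d) => ((p.2 : Set (Rd d)) ∩ A).ncard) :=
    (measurable_finset_ncard A hA).comp measurable_snd
  have key : ∀ p : Rd d × Finset (Rd d), (((insert p.1 p.2 : Finset (Rd d)) : Set (Rd d)) ∩ A).ncard
      = (if p.1 ∈ A ∧ p.1 ∉ p.2 then 1 else 0) + ((p.2 : Set (Rd d)) ∩ A).ncard := by
    rintro ⟨x, η⟩
    simp only [Finset.coe_insert]
    by_cases hx : x ∈ A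
    · rw [Set.insert_inter_of_mem hx]
      by_cases h : x ∈ η
      · rw [Set.insert_eq_of_mem (show x ∈ (η : Set (Rd d)) ∩ A from ⟨h, hx⟩)]; simp [h]
      · rw [Set.ncard_insert_of_notMem (fun hh => h hh.1)
          (η.finite_toSet.subset Set.inter_subset_left)]
        simp [hx, h, add_comm]
    · rw [Set.insert_inter_of_notMem hx]; simp [hx]
  have : Measurable (fun p : Rd d × Finset (Rd d) =>
      (((insert p.1 p.2 : Finset (Rd d)) : Set (Rd d)) ∩ A).ncard) := by
    simp_rw [key]
    exact (Measurable.ite (hA'.inter hm.compl) measurable_const measurable_const).add hc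
  exact this (measurableSet_singleton n)

theorem measurable_finset_image {X ι : Type*} [MeasurableSpace X] (f : ι → X → Rd d)
    (hf : ∀ i, Measurable (f i)) (I : Finset ι) :
    Measurable (fun x => I.image (fun i => f i x)) := by
  induction I using Finset.induction_on with
  | empty => simp
  | insert i I hi ih =>
    simp only [Finset.image_insert]
    exact measurable_finset_insert.comp ((hf i).prodMk ih)

theorem measurable_tsum_points {X M : Type*} [MeasurableSpace X] [AddCommMonoid M]
    [TopologicalSpace M] [TopologicalSpace.IsCompletelyPseudoMetrizableSpace M]
    [SecondCountableTopology M] [MeasurableSpace M] [BorelSpace M] [MeasurableAdd₂ M]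
    (g : X → Config d) (hg : Measurable g) (h : X × Rd d → M) (hh : Measurable h) :
    Measurable (fun p => ∑' y : (g p).1, h (p, y)) := by
  have : (fun p => ∑' y : (g p).1, h (p, y)) = fun p => ∑' i : ℕ × ℕ,
      if g p ∈ eValid d i then h (p, ePt d i (g p)) else 0 := by
    ext p; exact tsum_points (g p) (fun y => h (p, y))
  rw [this]
  refine Measurable.tsum fun i => ?_
  exact Measurable.ite (hg (measurableSet_eValid i))
    (hh.comp (measurable_id.prodMk ((measurable_ePt i).comp hg))) measurable_const

theorem measurable_tsum_finsets {X M : Type*} [MeasurableSpace X] [AddCommMonoid M]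
    [TopologicalSpace M] [TopologicalSpace.IsCompletelyPseudoMetrizableSpace M]
    [SecondCountableTopology M] [MeasurableSpace M] [BorelSpace M] [MeasurableAdd₂ M]
    (g : X → Config d) (hg : Measurable g) (G : X × Finset (Rd d) → M) (hG : Measurable G) :
    Measurable (fun p => Ktrans (fun η => G (p, η)) (g p)) := by
  have : (fun p => Ktrans (fun η => G (p, η)) (g p)) = fun p => ∑' I : Finset (ℕ × ℕ),
      if (∀ i ∈ I, g p ∈ eValid d i) then
        G (p, I.image (fun i => ePt d i (g p))) else 0 := by
    ext p; exact tsum_finsets (g p) (fun η => G (p, η))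
  rw [this]
  refine Measurable.tsum fun I => ?_
  refine Measurable.ite ?_ (hG.comp (measurable_id.prodMk
    (measurable_finset_image _ (fun i => (measurable_ePt i).comp hg) I))) measurable_const
  rw [show {p | ∀ i ∈ I, g p ∈ eValid d i} = ⋂ i ∈ I, g ⁻¹' eValid d i by ext; simp]
  exact Finset.measurableSet_biInter _ fun i _ => hg (measurableSet_eValid i)

end Enumeration


section Moments

variable {d : ℕ}

theorem lintegral_pi_prod (n : ℕ) (g : Rd d → ℝ≥0∞) (hg : Measurable g) :
    ∫⁻ x : Fin n → Rd d, ∏ i, g (x i) = (∫⁻ y, g y) ^ n := by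
  induction n with
  | zero => simp [volume_pi]
  | succ n ih =>
    have h := (volume_preserving_piFinSuccAbove (fun _ : Fin (n + 1) => Rd d) 0)
    have hm : Measurable (fun p : Rd d × (Fin n → Rd d) => g p.1 * ∏ i, g (p.2 i)) := by
      refine (hg.comp measurable_fst).mul ?_
      exact Finset.measurable_fun_prod _ fun i _ =>
        hg.comp ((measurable_pi_apply i).comp measurable_snd)
    have h2 := h.lintegral_comp hm
    rw [pow_succ', ← ih]
    have h3 : (∫⁻ b : Rd d × (Fin n → Rd d), g b.1 * ∏ i, g (b.2 i)) =
        (∫⁻ y, g y) * ∫⁻ x : Fin n → Rd d, ∏ i, g (x i) := by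
      rw [Measure.volume_eq_prod]
      refine lintegral_prod_mul (μ := volume) (ν := volume) (f := g)
        (g := fun x : Fin n → Rd d => ∏ i, g (x i)) hg.aemeasurable (Measurable.aemeasurable ?_)
      exact Finset.measurable_fun_prod _ fun i _ => hg.comp (measurable_pi_apply i)
    rw [← h3]
    refine Eq.trans ?_ h2
    refine lintegral_congr fun x => ?_
    rw [Fin.prod_univ_succ]
    rfl

theorem ae_injective (hd : d ≠ 0) (n : ℕ) :
    ∀ᵐ x : Fin n → Rd d, Function.Injective x := by
  have : (volume : Measure (Fin n → Rd d)).IsAddHaarMeasure := by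
    rw [volume_pi]; exact Measure.pi.isAddHaarMeasure (α := fun _ : Fin n => Rd d) _
  have h : ∀ i j : Fin n, i ≠ j → ∀ᵐ x : Fin n → Rd d, x i ≠ x j := by
    intro i j hij
    let S : Submodule ℝ (Fin n → Rd d) :=
      LinearMap.ker (LinearMap.proj (R := ℝ) (φ := fun _ : Fin n => Rd d) i -
        LinearMap.proj (R := ℝ) (φ := fun _ : Fin n => Rd d) j)
    have hS : S ≠ ⊤ := by
      intro hS
      have hx : (Pi.single i (fun _ => (1 : ℝ)) : Fin n → Rd d) ∈ S := by rw [hS]; trivial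
      simp only [S, LinearMap.mem_ker, LinearMap.sub_apply, LinearMap.proj_apply,
        Pi.single_eq_same, Pi.single_eq_of_ne hij.symm, sub_zero] at hx
      have := congrFun hx ⟨0, Nat.pos_of_ne_zero hd⟩
      simp at this
    have h0 := Measure.addHaar_submodule (volume : Measure (Fin n → Rd d)) S hS
    have h1 := measure_eq_zero_iff_ae_notMem.1 h0
    filter_upwards [h1] with x hx hxe
    apply hx
    simp [S, LinearMap.mem_ker, hxe]
  have h' : ∀ᵐ x : Fin n → Rd d, ∀ i j : Fin n, i ≠ j → x i ≠ x j := by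
    rw [ae_all_iff]; intro i
    rw [ae_all_iff]; intro j
    by_cases hij : i = j
    · simp [hij]
    · filter_upwards [h i j hij] with x hx _ using hx
  filter_upwards [h'] with x hx i j hij
  by_contra hne
  exact hx i j hne hij

/-- The Lebesgue-Poisson exponential. -/
noncomputable def eL (g : Rd d → ℝ≥0∞) (η : Finset (Rd d)) : ℝ≥0∞ := ∏ y ∈ η, g y

theorem lintegral_image_le (n : ℕ) (g : Rd d → ℝ≥0∞) (hg : Measurable g) :
    ∫⁻ x : Fin n → Rd d, eL g (Finset.image x Finset.univ) ≤ (1 + ∫⁻ y, g y) ^ n := by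
  by_cases hd : d = 0
  · subst hd
    have hv : (volume : Measure (Rd 0)) Set.univ = 1 := by simp [volume_pi]
    have hvn : (volume : Measure (Fin n → Rd 0)) Set.univ = 1 := by
      rw [volume_pi, Measure.pi_univ]; simp [hv]
    rw [lintegral_unique, lintegral_unique, hvn, hv, mul_one, mul_one]
    rcases Nat.eq_zero_or_pos n with h0 | h0
    · subst h0; simp [eL]
    · have : ∀ x : Fin n → Rd 0, Finset.image x Finset.univ = {default} := by
        intro x
        ext y
        simp only [Finset.mem_image, Finset.mem_univ, true_and, Finset.mem_singleton]
        exact ⟨fun _ => Subsingleton.elim _ _, fun _ => ⟨⟨0, h0⟩, Subsingleton.elim _ _⟩⟩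
      rw [this, eL, Finset.prod_singleton]
      obtain ⟨c, hc⟩ : ∃ c, ∀ a, g a = c := ⟨g 0, fun a => congrArg g (Subsingleton.elim _ _)⟩
      simp only [hc]
      calc c ≤ (1 + c) ^ 1 := by rw [pow_one]; exact le_add_self
        _ ≤ _ := pow_le_pow_right₀ le_self_add h0
  · calc ∫⁻ x : Fin n → Rd d, eL g (Finset.image x Finset.univ)
        = ∫⁻ x : Fin n → Rd d, ∏ i, g (x i) := by
          refine lintegral_congr_ae ?_
          filter_upwards [ae_injective hd n] with x hx
          rw [eL, Finset.prod_image hx.injOn]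
      _ = (∫⁻ y, g y) ^ n := lintegral_pi_prod n g hg
      _ ≤ _ := pow_le_pow_left₀ zero_le le_add_self n

theorem tprod_points {M : Type*} [CommMonoid M] [TopologicalSpace M] (γ : Config d)
    (h : Rd d → M) :
    ∏' y : γ.1, h y = ∏' i : ℕ × ℕ, if γ ∈ eValid d i then h (ePt d i γ) else 1 := by
  rw [← ((bijOn_ePt γ).equiv).tprod_eq (fun y : γ.1 => h y)]
  rw [show (fun i : ℕ × ℕ => if γ ∈ eValid d i then h (ePt d i γ) else 1) =
    Set.mulIndicator {i | γ ∈ eValid d i} (fun i => h (ePt d i γ)) from ?_]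
  · rw [← tprod_subtype]; rfl
  · ext i; simp [Set.mulIndicator]

theorem measurable_eL_param {X : Type*} [MeasurableSpace X] (h : X × Rd d → ℝ≥0∞)
    (hh : Measurable h) :
    Measurable (fun q : X × Finset (Rd d) => eL (fun y => h (q.1, y)) q.2) := by
  have : (fun q : X × Finset (Rd d) => eL (fun y => h (q.1, y)) q.2) =
      fun q => ∏' i : ℕ × ℕ, if Config.ofFinset q.2 ∈ eValid d i then
        h (q.1, ePt d i (Config.ofFinset q.2)) else 1 := by
    ext q
    rw [← tprod_points (Config.ofFinset q.2) (fun y => h (q.1, y))]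
    exact (Finset.tprod_subtype q.2 (fun y => h (q.1, y))).symm
  rw [this]
  have hg : Measurable (fun q : X × Finset (Rd d) => Config.ofFinset q.2) :=
    measurable_ofFinset.comp measurable_snd
  refine Measurable.tprod fun i => ?_
  exact Measurable.ite (hg (measurableSet_eValid i))
    (hh.comp (measurable_fst.prodMk ((measurable_ePt i).comp hg))) measurable_const

theorem measurable_eL (g : Rd d → ℝ≥0∞) (hg : Measurable g) : Measurable (eL g) := by
  have := (measurable_eL_param (X := Unit) (fun p => g p.2) (hg.comp measurable_snd)).comp
    (measurable_const (a := ()) |>.prodMk measurable_id)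
  exact this

theorem lintegral_eL_le (z : ℝ) (hz : 0 < z) (ρ : Measure (Finset (Rd d)))
    (k : Finset (Rd d) → ℝ) (hk_meas : Measurable k)
    (hk_dens : ρ = (lambdaLP d z).withDensity fun η => ENNReal.ofReal (k η))
    (C : ℝ) (hC : 0 < C) (hRB : ∀ η : Finset (Rd d), k η ≤ C ^ η.card)
    (D : ℝ≥0∞) (hD : D < ⊤) :
    ∃ M : ℝ≥0∞, M < ⊤ ∧ ∀ g : Rd d → ℝ≥0∞, Measurable g → ∫⁻ y, g y ≤ D →
      ∫⁻ η, eL g η ∂ρ ≤ M := by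
  set r : ℝ := 1 + C * D.toReal with hr
  have hr0 : 0 ≤ r := by positivity
  refine ⟨∑' n : ℕ, ENNReal.ofReal ((z * r) ^ n / n.factorial), ?_, ?_⟩
  · rw [← ENNReal.ofReal_tsum_of_nonneg (fun n => by positivity)
      (Real.summable_pow_div_factorial _)]
    exact ENNReal.ofReal_lt_top
  · intro g hg hgD
    have hg' : Measurable (fun y => ENNReal.ofReal C * g y) := hg.const_mul _
    have hle : ∀ η, (ENNReal.ofReal (k η)) * eL g η ≤ eL (fun y => ENNReal.ofReal C * g y) η := by
      intro η
      rw [eL, eL, Finset.prod_mul_distrib, Finset.prod_const, ← ENNReal.ofReal_pow hC.le]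
      gcongr
      exact hRB η
    have himg : ∀ n, Measurable (fun x : Fin n → Rd d => Finset.image x Finset.univ) := fun n =>
      measurable_finset_image (fun i (x : Fin n → Rd d) => x i)
        (fun i => measurable_pi_apply i) Finset.univ
    rw [hk_dens, lintegral_withDensity_eq_lintegral_mul _ hk_meas.ennreal_ofReal
      (measurable_eL g hg)]
    calc _ ≤ ∫⁻ η, eL (fun y => ENNReal.ofReal C * g y) η ∂(lambdaLP d z) :=
          lintegral_mono hle
      _ = ∑' n : ℕ, ENNReal.ofReal (z ^ n / n.factorial) * ∫⁻ x : Fin n → Rd d,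
            eL (fun y => ENNReal.ofReal C * g y) (Finset.image x Finset.univ) := by
          rw [lambdaLP, lintegral_sum_measure]
          refine tsum_congr fun n => ?_
          rw [lintegral_smul_measure, lintegral_map (measurable_eL _ hg') (himg n), smul_eq_mul]
      _ ≤ _ := by
          refine ENNReal.tsum_le_tsum fun n => ?_
          rw [mul_pow, mul_comm (z ^ n), mul_div_assoc, mul_comm (r ^ n),
            ENNReal.ofReal_mul (by positivity)]
          gcongr
          refine (lintegral_image_le n _ hg').trans ?_
          rw [ENNReal.ofReal_pow hr0]
          gcongr
          rw [hr, ENNReal.ofReal_add zero_le_one (by positivity), ENNReal.ofReal_one,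
            ENNReal.ofReal_mul hC.le, ENNReal.ofReal_toReal hD.ne, lintegral_const_mul _ hg]
          gcongr

theorem measurableSet_subset (A : Set (Rd d)) (hA : MeasurableSet A) :
    MeasurableSet {η : Finset (Rd d) | (η : Set (Rd d)) ⊆ A} := by
  have := (measurable_finset_ncard Aᶜ hA.compl) (measurableSet_singleton 0)
  convert this using 1
  ext η
  simp only [Set.mem_ofPred_eq, Set.mem_preimage, Set.mem_singleton_iff]
  rw [Set.ncard_eq_zero (η.finite_toSet.subset Set.inter_subset_left),
    ← Set.disjoint_iff_inter_eq_empty, Set.disjoint_compl_right_iff_subset]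

theorem measurable_finset_card : Measurable (fun η : Finset (Rd d) => η.card) := by
  have := measurable_finset_ncard (d := d) Set.univ MeasurableSet.univ
  simpa using this

theorem exists_good (η : Finset (Rd d)) :
    ∃ n : ℕ, (η : Set (Rd d)) ⊆ Metric.closedBall 0 n ∧ η.card ≤ n := by
  obtain ⟨R, hR⟩ := η.finite_toSet.isBounded.subset_closedBall (0 : Rd d)
  obtain ⟨m, hm⟩ := exists_nat_ge R
  refine ⟨max m η.card, hR.trans (Metric.closedBall_subset_closedBall (hm.trans ?_)),
    le_max_right _ _⟩
  exact_mod_cast le_max_left _ _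

theorem lintegral_Ktrans_eq (μ : Measure (Config d)) (ρ : Measure (Finset (Rd d)))
    (hρ : IsCorrelationMeasure μ ρ) (G : Finset (Rd d) → ℝ≥0∞) (hG : Measurable G) :
    ∫⁻ γ, Ktrans G γ ∂μ = ∫⁻ η, G η ∂ρ := by
  let r : Finset (Rd d) → ℕ := fun η => Nat.find (exists_good η)
  have hr : Measurable r := by
    refine measurable_find exists_good fun n => ?_
    exact (measurableSet_subset _ measurableSet_closedBall).inter
      (measurable_finset_card (measurableSet_Iic (a := n)))
  let H : ℕ → Finset (Rd d) → ℝ≥0∞ := fun n η => if r η = n then G η else 0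
  have hH : ∀ n, Measurable (H n) := fun n =>
    Measurable.ite (hr (measurableSet_singleton n)) hG measurable_const
  have hsum : ∀ η, ∑' n, H n η = G η := by
    intro η
    rw [tsum_eq_single (r η)]
    · simp [H]
    · intro n hn; simp [H, hn.symm]
  have hK : ∀ n, Measurable (fun γ => Ktrans (H n) γ) := fun n =>
    measurable_tsum_finsets (fun γ => γ) measurable_id (fun p => H n p.2)
      ((hH n).comp measurable_snd)
  have h1 : ∀ γ, Ktrans G γ = ∑' n, Ktrans (H n) γ := by
    intro γ
    unfold Ktrans
    rw [ENNReal.tsum_comm]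
    exact tsum_congr fun η => (hsum _).symm
  simp_rw [h1, ← hsum]
  rw [lintegral_tsum fun n => (hK n).aemeasurable, lintegral_tsum fun n => (hH n).aemeasurable]
  refine tsum_congr fun n => (hρ (H n) (hH n) ⟨n, Metric.closedBall 0 n,
    isCompact_closedBall _ _, ?_⟩).symm
  intro η hη
  simp only [H]
  rw [if_neg]
  rintro rfl
  exact hη (Nat.find_spec (exists_good η))

end Moments


section Combinatorics

variable {d : ℕ}

/-- The points of a configuration in a compact set. -/
noncomputable def loc (γ : Config d) {Λ : Set (Rd d)} (hΛ : IsCompact Λ) : Finset (Rd d) :=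
  (γ.2 Λ hΛ).toFinset

theorem mem_loc (γ : Config d) {Λ : Set (Rd d)} (hΛ : IsCompact Λ) (x : Rd d) :
    x ∈ loc γ hΛ ↔ x ∈ γ.1 ∧ x ∈ Λ := by
  simp [loc]

theorem Ktrans_eq_indicator {M : Type*} [AddCommMonoid M] [TopologicalSpace M]
    (G : Finset (Rd d) → M) (γ : Config d) :
    Ktrans G γ = ∑' η : Finset (Rd d), Set.indicator
      {η : Finset (Rd d) | (η : Set (Rd d)) ⊆ γ.1} G η := by
  rw [← tsum_subtype]; rfl

theorem Ktrans_eq_loc (G : Finset (Rd d) → ℝ) {Λ : Set (Rd d)} (hΛ : IsCompact Λ)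
    (hG : ∀ η : Finset (Rd d), ¬ (η : Set (Rd d)) ⊆ Λ → G η = 0) (γ : Config d) :
    Ktrans G γ = ∑ η ∈ (loc γ hΛ).powerset, G η := by
  rw [Ktrans_eq_indicator, tsum_eq_sum (s := (loc γ hΛ).powerset)]
  · refine Finset.sum_congr rfl fun η hη => ?_
    rw [Set.indicator_of_mem]
    intro y hy
    exact ((mem_loc γ hΛ y).1 (Finset.mem_powerset.1 hη hy)).1
  · intro η hη
    by_cases h : (η : Set (Rd d)) ⊆ Λ
    · rw [Set.indicator_of_notMem]
      intro h'
      apply hη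
      rw [Finset.mem_powerset]
      intro y hy
      exact (mem_loc γ hΛ y).2 ⟨h' hy, h hy⟩
    · simp [Set.indicator, hG η h]

theorem Ktrans_ofFinset (G : Finset (Rd d) → ℝ) (ξ : Finset (Rd d)) :
    Ktrans G (Config.ofFinset ξ) = ∑ ζ ∈ ξ.powerset, G ζ := by
  rw [Ktrans_eq_indicator, tsum_eq_sum (s := ξ.powerset)]
  · refine Finset.sum_congr rfl fun η hη => ?_
    rw [Set.indicator_of_mem]
    exact Finset.coe_subset.2 (Finset.mem_powerset.1 hη)
  · intro η hη
    rw [Set.indicator_of_notMem]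
    intro h'
    exact hη (Finset.mem_powerset.2 (Finset.coe_subset.1 h'))

theorem Ktrans_insert_sub (G : Finset (Rd d) → ℝ) {Λ : Set (Rd d)} (hΛ : IsCompact Λ)
    (hG : ∀ η : Finset (Rd d), ¬ (η : Set (Rd d)) ⊆ Λ → G η = 0) (γ : Config d) (x : Rd d) :
    Ktrans G (γ.insertPt x) - Ktrans G γ =
      if x ∈ γ.1 then 0 else Ktrans (fun ζ => G (insert x ζ)) γ := by
  have hG' : ∀ η : Finset (Rd d), ¬ (η : Set (Rd d)) ⊆ Λ → G (insert x η) = 0 := by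
    intro η hη
    refine hG _ fun h => hη (subset_trans ?_ h)
    exact Finset.coe_subset.2 (Finset.subset_insert x η)
  split_ifs with hx
  · have : γ.insertPt x = γ := Subtype.ext (Set.insert_eq_of_mem hx)
    rw [this, sub_self]
  · rw [Ktrans_eq_loc G hΛ hG, Ktrans_eq_loc G hΛ hG,
      Ktrans_eq_loc (fun ζ => G (insert x ζ)) hΛ hG']
    by_cases hxΛ : x ∈ Λ
    · have h1 : loc (γ.insertPt x) hΛ = insert x (loc γ hΛ) := by
        ext y
        rw [mem_loc, Finset.mem_insert, mem_loc]
        simp only [Config.insertPt, Set.mem_insert_iff]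
        constructor
        · rintro ⟨h | h, h'⟩
          · exact Or.inl h
          · exact Or.inr ⟨h, h'⟩
        · rintro (rfl | h)
          · exact ⟨Or.inl rfl, hxΛ⟩
          · exact ⟨Or.inr h.1, h.2⟩
      have h2 : x ∉ loc γ hΛ := fun h => hx ((mem_loc γ hΛ x).1 h).1
      rw [h1, Finset.sum_powerset_insert h2]
      ring
    · have h1 : loc (γ.insertPt x) hΛ = loc γ hΛ := by
        ext y
        rw [mem_loc, mem_loc]
        simp only [Config.insertPt, Set.mem_insert_iff]
        constructor
        · rintro ⟨rfl | h, h'⟩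
          · exact absurd h' hxΛ
          · exact ⟨h, h'⟩
        · exact fun h => ⟨Or.inr h.1, h.2⟩
      rw [h1, sub_self, Finset.sum_eq_zero]
      intro ζ _
      refine hG _ fun h => hxΛ (h ?_)
      simp

theorem tsum_erase (G : Finset (Rd d) → ℝ) {Λ : Set (Rd d)} (hΛ : IsCompact Λ)
    (hG : ∀ η : Finset (Rd d), ¬ (η : Set (Rd d)) ⊆ Λ → G η = 0) (γ : Config d) :
    ∑' x : γ.1, (Ktrans G (γ.erasePt x) - Ktrans G γ) =
      - Ktrans (fun ζ => (ζ.card : ℝ) * G ζ) γ := by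
  set s := loc γ hΛ with hs
  have h1 : ∀ x : Rd d, Ktrans G (γ.erasePt x) - Ktrans G γ =
      - ∑ ζ ∈ s.powerset, if x ∈ ζ then G ζ else 0 := by
    intro x
    rw [Ktrans_eq_loc G hΛ hG, Ktrans_eq_loc G hΛ hG]
    have h2 : (loc (γ.erasePt x) hΛ).powerset = s.powerset.filter (fun ζ => x ∉ ζ) := by
      ext ζ
      simp only [Finset.mem_powerset, Finset.mem_filter]
      constructor
      · intro h
        refine ⟨fun y hy => ?_, fun hx => ?_⟩
        · have := (mem_loc _ hΛ y).1 (h hy)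
          exact (mem_loc _ hΛ y).2 ⟨this.1.1, this.2⟩
        · have := (mem_loc _ hΛ x).1 (h hx)
          exact this.1.2 rfl
      · rintro ⟨h, hx⟩ y hy
        have := (mem_loc _ hΛ y).1 (h hy)
        refine (mem_loc _ hΛ y).2 ⟨⟨this.1, ?_⟩, this.2⟩
        rintro rfl
        exact hx hy
    rw [h2, ← hs, Finset.sum_filter, ← Finset.sum_sub_distrib, ← Finset.sum_neg_distrib]
    refine Finset.sum_congr rfl fun ζ _ => ?_
    by_cases h : x ∈ ζ <;> simp [h]
  simp_rw [h1]
  rw [tsum_subtype γ.1 (fun x => - ∑ ζ ∈ s.powerset, if x ∈ ζ then G ζ else 0),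
    tsum_eq_sum (s := s)]
  · rw [Ktrans_eq_loc (fun ζ => (ζ.card : ℝ) * G ζ) hΛ (fun η hη => by simp [hG η hη]), ← hs,
      ← Finset.sum_neg_distrib]
    have : ∀ x ∈ s, γ.1.indicator (fun x => - ∑ ζ ∈ s.powerset, if x ∈ ζ then G ζ else 0) x =
        ∑ ζ ∈ s.powerset, - if x ∈ ζ then G ζ else 0 := by
      intro x hx
      rw [Set.indicator_of_mem ((mem_loc γ hΛ x).1 hx).1, Finset.sum_neg_distrib]
    rw [Finset.sum_congr rfl this, Finset.sum_comm]
    refine Finset.sum_congr rfl fun ζ hζ => ?_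
    rw [Finset.sum_neg_distrib, ← Finset.sum_filter, Finset.sum_const, nsmul_eq_mul]
    congr 3
    rw [Finset.filter_mem_eq_inter, Finset.inter_eq_right.2 (Finset.mem_powerset.1 hζ)]
  · intro x hx
    have : ∑ ζ ∈ s.powerset, (if x ∈ ζ then G ζ else 0) = 0 := by
      refine Finset.sum_eq_zero fun ζ hζ => ?_
      rw [if_neg]
      exact fun h => hx (Finset.mem_powerset.1 hζ h)
    simp [Set.indicator, this]

theorem mobius_prod {α : Type*} (e : α → ℝ) (η : Finset α) : ∀ a : Finset α → ℝ,
    ∑ ξ ∈ η.powerset, (-1 : ℝ) ^ (η.card - ξ.card) * ((∏ y ∈ ξ, e y) * ∑ ζ ∈ ξ.powerset, a ζ) =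
      ∑ ζ ∈ η.powerset, a ζ * (∏ y ∈ ζ, e y) * ∏ y ∈ η \ ζ, (e y - 1) := by
  induction η using Finset.induction_on with
  | empty => intro a; simp
  | insert x η hx ih =>
    intro a
    rw [Finset.sum_powerset_insert hx, Finset.sum_powerset_insert hx]
    have hcard : ∀ ξ ∈ η.powerset, ξ.card ≤ η.card := fun ξ h =>
      Finset.card_le_card (Finset.mem_powerset.1 h)
    have hnot : ∀ ξ ∈ η.powerset, x ∉ ξ := fun ξ h h' => hx (Finset.mem_powerset.1 h h')
    have e1 : ∑ ξ ∈ η.powerset, (-1 : ℝ) ^ ((insert x η).card - ξ.card) *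
        ((∏ y ∈ ξ, e y) * ∑ ζ ∈ ξ.powerset, a ζ) =
        - ∑ ξ ∈ η.powerset, (-1 : ℝ) ^ (η.card - ξ.card) *
          ((∏ y ∈ ξ, e y) * ∑ ζ ∈ ξ.powerset, a ζ) := by
      rw [← Finset.sum_neg_distrib]
      refine Finset.sum_congr rfl fun ξ hξ => ?_
      rw [Finset.card_insert_of_notMem hx, Nat.succ_sub (hcard ξ hξ), pow_succ]
      ring
    have e2 : ∑ ξ ∈ η.powerset, (-1 : ℝ) ^ ((insert x η).card - (insert x ξ).card) *
        ((∏ y ∈ insert x ξ, e y) * ∑ ζ ∈ (insert x ξ).powerset, a ζ) =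
        e x * (∑ ξ ∈ η.powerset, (-1 : ℝ) ^ (η.card - ξ.card) *
          ((∏ y ∈ ξ, e y) * ∑ ζ ∈ ξ.powerset, a ζ)) +
        e x * (∑ ξ ∈ η.powerset, (-1 : ℝ) ^ (η.card - ξ.card) *
          ((∏ y ∈ ξ, e y) * ∑ ζ ∈ ξ.powerset, a (insert x ζ))) := by
      rw [Finset.mul_sum, Finset.mul_sum, ← Finset.sum_add_distrib]
      refine Finset.sum_congr rfl fun ξ hξ => ?_
      rw [Finset.card_insert_of_notMem hx, Finset.card_insert_of_notMem (hnot ξ hξ),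
        Nat.add_sub_add_right, Finset.prod_insert (hnot ξ hξ),
        Finset.sum_powerset_insert (hnot ξ hξ)]
      ring
    have e3 : ∑ ζ ∈ η.powerset, a ζ * (∏ y ∈ ζ, e y) * ∏ y ∈ insert x η \ ζ, (e y - 1) =
        (e x - 1) * ∑ ζ ∈ η.powerset, a ζ * (∏ y ∈ ζ, e y) * ∏ y ∈ η \ ζ, (e y - 1) := by
      rw [Finset.mul_sum]
      refine Finset.sum_congr rfl fun ζ hζ => ?_
      rw [Finset.insert_sdiff_of_notMem _ (hnot ζ hζ), Finset.prod_insert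
        (fun h => hx (Finset.mem_sdiff.1 h).1)]
      ring
    have e4 : ∑ ζ ∈ η.powerset, a (insert x ζ) * (∏ y ∈ insert x ζ, e y) *
          ∏ y ∈ insert x η \ insert x ζ, (e y - 1) =
        e x * ∑ ζ ∈ η.powerset, a (insert x ζ) * (∏ y ∈ ζ, e y) * ∏ y ∈ η \ ζ, (e y - 1) := by
      rw [Finset.mul_sum]
      refine Finset.sum_congr rfl fun ζ hζ => ?_
      rw [Finset.prod_insert (hnot ζ hζ), Finset.insert_sdiff_insert,
        Finset.sdiff_insert_of_notMem hx]
      ring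
    rw [e1, e2, e3, e4, ih a, ih (fun ζ => a (insert x ζ))]
    ring

theorem mobius_one {α : Type*} (η : Finset α) (a : Finset α → ℝ) :
    ∑ ξ ∈ η.powerset, (-1 : ℝ) ^ (η.card - ξ.card) * (∑ ζ ∈ ξ.powerset, a ζ) = a η := by
  have h := mobius_prod (fun _ : α => (1 : ℝ)) η a
  simp only [Finset.prod_const_one, one_mul, mul_one, sub_self] at h
  rw [h, Finset.sum_eq_single η]
  · simp
  · intro ζ hζ hne
    have hss := Finset.mem_powerset.1 hζ
    obtain ⟨y, hy⟩ : (η \ ζ).Nonempty := by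
      rw [Finset.sdiff_nonempty]
      exact fun h => hne (Finset.Subset.antisymm hss h)
    rw [Finset.prod_eq_zero hy rfl, mul_zero]
  · intro h; exact absurd (Finset.mem_powerset.2 subset_rfl) h

end Combinatorics


section Energy

variable {d : ℕ}

theorem measurable_expNegE : Measurable expNegE := by
  unfold expNegE
  refine Measurable.ite (measurableSet_singleton _) measurable_const ?_
  exact (Real.measurable_exp.comp (measurable_neg.comp measurable_ereal_toReal))

theorem expNegE_nonneg (a : EReal) : 0 ≤ expNegE a := by
  unfold expNegE; split_ifs
  · exact le_rfl
  · exact (Real.exp_pos _).le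

/-- The Boltzmann factor. -/
noncomputable def bw (V : PairPotential d) (x y : Rd d) : ℝ := expNegE (V.toFun (x - y))

theorem expNegRelEnergy_nonneg (V : PairPotential d) (x : Rd d) (γ : Set (Rd d)) :
    0 ≤ expNegRelEnergy V x γ := by
  unfold expNegRelEnergy; split_ifs
  · exact (Real.exp_pos _).le
  · exact le_rfl

theorem expNegRelEnergy_finset (V : PairPotential d) (x : Rd d) (ξ : Finset (Rd d))
    (hx : x ∉ ξ) : expNegRelEnergy V x (ξ : Set (Rd d)) = ∏ y ∈ ξ, bw V x y := by
  have hne : ∀ y ∈ ξ, V.toFun (x - y) ≠ ⊤ := by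
    intro y hy
    refine V.finite_off_zero' _ (sub_ne_zero.2 ?_)
    rintro rfl; exact hx hy
  unfold expNegRelEnergy
  rw [if_pos ⟨fun y hy => hne y (Finset.mem_coe.1 hy), (hasSum_fintype _).summable⟩]
  have h1 : ∑' y : (ξ : Set (Rd d)), (V.toFun (x - (y : Rd d))).toReal =
      ∑ y ∈ ξ, (V.toFun (x - y)).toReal :=
    Finset.tsum_subtype ξ (fun y => (V.toFun (x - y)).toReal)
  rw [h1, ← Finset.sum_neg_distrib, Real.exp_sum]
  refine Finset.prod_congr rfl fun y hy => ?_
  rw [bw, expNegE, if_neg (hne y hy)]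

theorem bw_le (V : PairPotential d) (B : ℝ) (hS : Stable V B) (x y : Rd d) (hxy : x ≠ y) :
    bw V x y ≤ Real.exp (2 * B) := by
  have hne := V.finite_off_zero' _ (sub_ne_zero.2 hxy)
  rw [bw, expNegE, if_neg hne]
  apply Real.exp_le_exp.2
  have h := hS.2 {x, y}
  have e1 : ({x, y} : Finset (Rd d)).erase x = {y} := by
    rw [Finset.erase_insert]; simpa using hxy
  have e2 : ({x, y} : Finset (Rd d)).erase y = {x} := by
    rw [Finset.pair_comm, Finset.erase_insert]; simpa using hxy.symm
  rw [pairEnergy, Finset.sum_pair hxy, e1, e2, Finset.sum_singleton, Finset.sum_singleton,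
    Finset.card_pair hxy, ← V.symm' (y - x), neg_sub] at h
  push_cast at h
  linarith

theorem measurable_expNegRelEnergy (V : PairPotential d) :
    Measurable (fun p : Config d × Rd d => expNegRelEnergy V p.2 p.1.1) := by
  have hV : Measurable (fun q : (Config d × Rd d) × Rd d => V.toFun (q.1.2 - q.2)) :=
    V.measurable'.comp ((measurable_snd.comp measurable_fst).sub measurable_snd)
  have hVr : Measurable (fun q : (Config d × Rd d) × Rd d => (V.toFun (q.1.2 - q.2)).toReal) :=
    measurable_ereal_toReal.comp hV
  have h1 : MeasurableSet {p : Config d × Rd d | ∀ y ∈ p.1.1, V.toFun (p.2 - y) ≠ ⊤} := by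
    have h := measurable_tsum_points (M := ℝ≥0∞) (fun p : Config d × Rd d => p.1) measurable_fst
      (fun q => if V.toFun (q.1.2 - q.2) = ⊤ then 1 else 0)
      (Measurable.ite (hV (measurableSet_singleton ⊤)) measurable_const measurable_const)
    have e : {p : Config d × Rd d | ∀ y ∈ p.1.1, V.toFun (p.2 - y) ≠ ⊤} = (fun p =>
        ∑' y : p.1.1, if V.toFun (p.2 - (y : Rd d)) = ⊤ then (1 : ℝ≥0∞) else 0) ⁻¹' {0} := by
      ext p
      simp [ENNReal.tsum_eq_zero]
    rw [e]
    exact h (measurableSet_singleton 0)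
  have h2 : MeasurableSet {p : Config d × Rd d |
      Summable (fun y : p.1.1 => |(V.toFun (p.2 - (y : Rd d))).toReal|)} := by
    have h := measurable_tsum_points (M := ℝ≥0∞) (fun p : Config d × Rd d => p.1) measurable_fst
      (fun q => ENNReal.ofReal |(V.toFun (q.1.2 - q.2)).toReal|)
      (Measurable.ennreal_ofReal (by simpa using hVr.abs))
    have e : {p : Config d × Rd d |
        Summable (fun y : p.1.1 => |(V.toFun (p.2 - (y : Rd d))).toReal|)} = (fun p =>
        ∑' y : p.1.1, ENNReal.ofReal |(V.toFun (p.2 - (y : Rd d))).toReal|) ⁻¹' {⊤}ᶜ := by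
      ext p
      simp only [Set.mem_ofPred_eq, Set.mem_preimage, Set.mem_compl_iff, Set.mem_singleton_iff]
      constructor
      · exact fun hs => hs.tsum_ofReal_ne_top
      · intro hs
        have := ENNReal.summable_toReal hs
        refine this.congr fun y => ?_
        rw [ENNReal.toReal_ofReal (abs_nonneg _)]
    rw [e]
    exact h (measurableSet_singleton ⊤).compl
  have h3 : Measurable (fun p : Config d × Rd d =>
      Real.exp (-∑' y : p.1.1, (V.toFun (p.2 - (y : Rd d))).toReal)) :=
    Real.measurable_exp.comp (measurable_neg.comp
      (measurable_tsum_points (M := ℝ) (fun p : Config d × Rd d => p.1) measurable_fst _ hVr))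
  exact Measurable.ite (h1.inter h2) h3 measurable_const

/-- The indicator of `Λ`. -/
noncomputable def ind (Λ : Set (Rd d)) (y : Rd d) : ℝ≥0∞ := Λ.indicator 1 y

theorem ind_of_mem {Λ : Set (Rd d)} {y : Rd d} (h : y ∈ Λ) : ind Λ y = 1 := by simp [ind, h]

theorem ind_of_not_mem {Λ : Set (Rd d)} {y : Rd d} (h : y ∉ Λ) : ind Λ y = 0 := by simp [ind, h]

theorem ind_le_one (Λ : Set (Rd d)) (y : Rd d) : ind Λ y ≤ 1 := by
  by_cases h : y ∈ Λ
  · rw [ind_of_mem h]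
  · rw [ind_of_not_mem h]; exact zero_le

theorem measurable_ind {Λ : Set (Rd d)} (hΛ : MeasurableSet Λ) : Measurable (ind Λ) :=
  measurable_one.indicator hΛ

/-- Mayer-type function. -/
noncomputable def mf (V : PairPotential d) (x y : Rd d) : ℝ≥0∞ := ENNReal.ofReal |1 - bw V x y|

/-- The dominating one-particle function. -/
noncomputable def gf (V : PairPotential d) (Λ : Set (Rd d)) (x y : Rd d) : ℝ≥0∞ :=
  2 * mf V x y + 3 * ind Λ y

theorem measurable_bw (V : PairPotential d) : Measurable (fun p : Rd d × Rd d => bw V p.1 p.2) :=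
  measurable_expNegE.comp (V.measurable'.comp (measurable_fst.sub measurable_snd))

theorem measurable_gf (V : PairPotential d) {Λ : Set (Rd d)} (hΛ : MeasurableSet Λ) :
    Measurable (fun p : Rd d × Rd d => gf V Λ p.1 p.2) := by
  unfold gf mf
  refine Measurable.add (Measurable.const_mul ?_ _)
    (Measurable.const_mul ((measurable_ind hΛ).comp measurable_snd) _)
  have := (measurable_const (a := (1 : ℝ))).sub (measurable_bw V)
  exact Measurable.ennreal_ofReal (by simpa using this.abs)

theorem lintegral_ind {Λ : Set (Rd d)} (hΛ : MeasurableSet Λ) :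
    ∫⁻ y, ind Λ y = volume Λ := by
  unfold ind
  rw [lintegral_indicator_one hΛ]

theorem lintegral_gf (V : PairPotential d) {Λ : Set (Rd d)} (hΛ : MeasurableSet Λ) (x : Rd d) :
    ∫⁻ y, gf V Λ x y =
      2 * (∫⁻ u : Rd d, ENNReal.ofReal |1 - expNegE (V.toFun u)|) + 3 * volume Λ := by
  unfold gf
  rw [lintegral_add_right _ ((measurable_ind hΛ).const_mul _),
    lintegral_const_mul _ (measurable_ind hΛ), lintegral_ind hΛ, lintegral_const_mul']
  · congr 2
    exact lintegral_sub_left_eq_self (fun u => ENNReal.ofReal |1 - expNegE (V.toFun u)|) x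
  · simp

theorem ofReal_bw_le (V : PairPotential d) (x y : Rd d) :
    ENNReal.ofReal (bw V x y) ≤ 1 + mf V x y := by
  rw [mf, ← ENNReal.ofReal_one, ← ENNReal.ofReal_add zero_le_one (abs_nonneg _)]
  apply ENNReal.ofReal_le_ofReal
  have := neg_abs_le (1 - bw V x y)
  linarith

theorem eL_mono {f g : Rd d → ℝ≥0∞} (η : Finset (Rd d)) (h : ∀ y ∈ η, f y ≤ g y) :
    eL f η ≤ eL g η := Finset.prod_le_prod' h

theorem sum_powerset_le_Ktrans (G : Finset (Rd d) → ℝ≥0∞) (γ : Config d) (t : Finset (Rd d))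
    (ht : (t : Set (Rd d)) ⊆ γ.1) : ∑ u ∈ t.powerset, G u ≤ Ktrans G γ := by
  rw [Ktrans_eq_indicator]
  refine le_trans (le_of_eq ?_) (ENNReal.sum_le_tsum t.powerset)
  refine Finset.sum_congr rfl fun u hu => ?_
  rw [Set.indicator_of_mem]
  exact (Finset.coe_subset.2 (Finset.mem_powerset.1 hu)).trans ht

theorem one_add_mul_le (f i : ℝ≥0∞) (hi : i ≤ 1) : (1 + f) * (1 + i) ≤ 1 + (2 * f + 3 * i) := by
  calc (1 + f) * (1 + i) = 1 + (f + i + f * i) := by ring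
    _ ≤ 1 + (f + i + f * 1) := by gcongr
    _ = 1 + (2 * f + i) := by ring
    _ ≤ 1 + (2 * f + 3 * i) := by
      gcongr
      calc i = 1 * i := (one_mul i).symm
        _ ≤ 3 * i := by gcongr; norm_num

theorem expNeg_bound (V : PairPotential d) {Λ : Set (Rd d)} (hΛ : IsCompact Λ) (x : Rd d)
    (γ : Config d) :
    ENNReal.ofReal (expNegRelEnergy V x γ.1) * 2 ^ (loc γ hΛ).card ≤ Ktrans (eL (gf V Λ x)) γ := by
  unfold expNegRelEnergy
  split_ifs with h
  swap
  · simp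
  obtain ⟨hne, hs⟩ := h
  have hs' : Summable (fun y : γ.1 => (V.toFun (x - (y : Rd d))).toReal) := summable_abs_iff.1 hs
  have ht := hs'.hasSum
  have ht1 : Filter.Tendsto (fun t : Finset γ.1 =>
      ENNReal.ofReal (Real.exp (-∑ y ∈ t, (V.toFun (x - (y : Rd d))).toReal)) *
        2 ^ (loc γ hΛ).card) Filter.atTop
      (nhds (ENNReal.ofReal (Real.exp (-∑' y : γ.1, (V.toFun (x - (y : Rd d))).toReal)) *
        2 ^ (loc γ hΛ).card)) := by
    refine ENNReal.Tendsto.mul_const ?_ (Or.inr (by simp))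
    refine ENNReal.tendsto_ofReal ?_
    exact (Real.continuous_exp.tendsto _).comp (Filter.Tendsto.neg ht)
  refine le_of_tendsto ht1 ?_
  let s' : Finset γ.1 := (loc γ hΛ).subtype (fun y => y ∈ γ.1)
  filter_upwards [Filter.eventually_ge_atTop s'] with t hst
  let t' : Finset (Rd d) := t.map (Function.Embedding.subtype _)
  have ht'γ : (t' : Set (Rd d)) ⊆ γ.1 := by
    intro y hy
    obtain ⟨w, _, rfl⟩ := Finset.mem_map.1 (Finset.mem_coe.1 hy)
    exact w.2
  have hsub : loc γ hΛ ⊆ t' := by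
    intro y hy
    have hyγ := ((mem_loc γ hΛ y).1 hy).1
    refine Finset.mem_map.2 ⟨⟨y, hyγ⟩, hst ?_, rfl⟩
    exact Finset.mem_subtype.2 hy
  have e1 : ENNReal.ofReal (Real.exp (-∑ y ∈ t, (V.toFun (x - (y : Rd d))).toReal)) =
      ∏ y ∈ t', ENNReal.ofReal (bw V x y) := by
    rw [Finset.prod_map, ← Finset.sum_neg_distrib, Real.exp_sum,
      ENNReal.ofReal_prod_of_nonneg (fun _ _ => (Real.exp_pos _).le)]
    refine Finset.prod_congr rfl fun y _ => ?_
    simp only [Function.Embedding.subtype_apply]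
    rw [bw, expNegE, if_neg (hne y y.2)]
  have e2 : (2 : ℝ≥0∞) ^ (loc γ hΛ).card ≤ ∏ y ∈ t', (1 + ind Λ y) := by
    calc (2 : ℝ≥0∞) ^ (loc γ hΛ).card = ∏ y ∈ loc γ hΛ, (1 + ind Λ y) := by
          rw [← Finset.prod_const]
          refine Finset.prod_congr rfl fun y hy => ?_
          rw [ind_of_mem ((mem_loc γ hΛ y).1 hy).2, one_add_one_eq_two]
      _ ≤ _ := Finset.prod_le_prod_of_subset_of_one_le' hsub fun _ _ _ => le_self_add
  rw [e1]
  calc _ ≤ (∏ y ∈ t', (1 + mf V x y)) * ∏ y ∈ t', (1 + ind Λ y) := by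
        gcongr
        exact ofReal_bw_le V x _
    _ = ∏ y ∈ t', ((1 + mf V x y) * (1 + ind Λ y)) := by rw [Finset.prod_mul_distrib]
    _ ≤ ∏ y ∈ t', (1 + gf V Λ x y) :=
        Finset.prod_le_prod' fun y _ => one_add_mul_le _ _ (ind_le_one Λ y)
    _ = ∑ u ∈ t'.powerset, eL (gf V Λ x) u := Finset.prod_one_add _
    _ ≤ _ := sum_powerset_le_Ktrans _ γ t' ht'γ

theorem G_insert_bound (G : Finset (Rd d) → ℝ) {Λ : Set (Rd d)} (L : ℝ)
    (hL : ∀ η, |G η| ≤ L)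
    (hG : ∀ η : Finset (Rd d), ¬ (η : Set (Rd d)) ⊆ Λ → G η = 0) (x : Rd d) (ζ : Finset (Rd d)) :
    ‖G (insert x ζ)‖ₑ ≤ ENNReal.ofReal L * ind Λ x * eL (ind Λ) ζ := by
  by_cases h : ((insert x ζ : Finset (Rd d)) : Set (Rd d)) ⊆ Λ
  · rw [ind_of_mem (h (by simp)), eL, Finset.prod_congr rfl (g := fun _ => 1)
      (fun y hy => ind_of_mem (h (by simp [hy]))), Finset.prod_const_one, mul_one, mul_one,
      Real.enorm_eq_ofReal_abs]
    exact ENNReal.ofReal_le_ofReal (hL _)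
  · rw [hG _ h]; simp

theorem cardG_bound (G : Finset (Rd d) → ℝ) {Λ : Set (Rd d)} (L : ℝ)
    (hL : ∀ η, |G η| ≤ L)
    (hG : ∀ η : Finset (Rd d), ¬ (η : Set (Rd d)) ⊆ Λ → G η = 0) (ζ : Finset (Rd d)) :
    ‖(ζ.card : ℝ) * G ζ‖ₑ ≤ ENNReal.ofReal L * eL (fun y => 3 * ind Λ y) ζ := by
  by_cases h : (ζ : Set (Rd d)) ⊆ Λ
  · have e1 : eL (fun y => 3 * ind Λ y) ζ = 3 ^ ζ.card := by
      rw [eL, Finset.prod_congr rfl (g := fun _ => 3)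
        (fun y hy => by rw [ind_of_mem (h hy), mul_one]), Finset.prod_const]
    rw [e1, enorm_mul, mul_comm, Real.enorm_eq_ofReal_abs, Real.enorm_natCast]
    gcongr
    · exact hL _
    · have : ζ.card ≤ 3 ^ ζ.card := (Nat.lt_pow_self (by norm_num)).le
      exact_mod_cast this
  · rw [hG _ h]; simp

theorem Ktrans_D_bound (V : PairPotential d) (G : Finset (Rd d) → ℝ) {Λ : Set (Rd d)}
    (hΛ : IsCompact Λ) (L : ℝ) (hL : ∀ η, |G η| ≤ L)
    (hG : ∀ η : Finset (Rd d), ¬ (η : Set (Rd d)) ⊆ Λ → G η = 0) (γ : Config d) (x : Rd d) :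
    ‖expNegRelEnergy V x γ.1 * (Ktrans G (γ.insertPt x) - Ktrans G γ)‖ₑ ≤
      ENNReal.ofReal L * (ind Λ x * Ktrans (eL (gf V Λ x)) γ) := by
  rw [Ktrans_insert_sub G hΛ hG]
  split_ifs with hx
  · simp
  have hG' : ∀ η : Finset (Rd d), ¬ (η : Set (Rd d)) ⊆ Λ → G (insert x η) = 0 := by
    intro η hη
    refine hG _ fun h => hη (subset_trans ?_ h)
    exact Finset.coe_subset.2 (Finset.subset_insert x η)
  rw [Ktrans_eq_loc (fun ζ => G (insert x ζ)) hΛ hG', enorm_mul,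
    Real.enorm_eq_ofReal (expNegRelEnergy_nonneg _ _ _)]
  have h1 : ‖∑ η ∈ (loc γ hΛ).powerset, G (insert x η)‖ₑ ≤
      ENNReal.ofReal L * ind Λ x * 2 ^ (loc γ hΛ).card := by
    calc _ ≤ ∑ η ∈ (loc γ hΛ).powerset, ‖G (insert x η)‖ₑ := enorm_sum_le _ _
      _ ≤ ∑ η ∈ (loc γ hΛ).powerset, ENNReal.ofReal L * ind Λ x := by
          refine Finset.sum_le_sum fun η _ => (G_insert_bound G L hL hG x η).trans ?_
          refine mul_le_of_le_one_right' ?_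
          exact Finset.prod_le_one' fun y _ => ind_le_one Λ y
      _ = _ := by
          rw [Finset.sum_const, Finset.card_powerset, nsmul_eq_mul, mul_comm]
          push_cast; rfl
  calc _ ≤ ENNReal.ofReal (expNegRelEnergy V x γ.1) *
        (ENNReal.ofReal L * ind Λ x * 2 ^ (loc γ hΛ).card) := by gcongr
    _ = ENNReal.ofReal L * (ind Λ x * (ENNReal.ofReal (expNegRelEnergy V x γ.1) *
        2 ^ (loc γ hΛ).card)) := by ring
    _ ≤ _ := by gcongr; exact expNeg_bound V hΛ x γ

attribute [irreducible] gf mf bw ind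

end Energy


section Final

variable {d : ℕ}

/-- The birth integrand. -/
noncomputable def birth (V : PairPotential d) (G : Finset (Rd d) → ℝ) (γ : Config d) (x : Rd d) : ℝ :=
  expNegRelEnergy V x γ.1 * (Ktrans G (γ.insertPt x) - Ktrans G γ)

theorem measurable_birth (V : PairPotential d) (G : Finset (Rd d) → ℝ) (hGm : Measurable G)
    {Λ : Set (Rd d)} (hΛ : IsCompact Λ)
    (hG : ∀ η : Finset (Rd d), ¬ (η : Set (Rd d)) ⊆ Λ → G η = 0) :
    Measurable (fun p : Config d × Rd d => birth V G p.1 p.2) := by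
  unfold birth
  refine (measurable_expNegRelEnergy V).mul ?_
  simp only [Ktrans_insert_sub G hΛ hG]
  refine Measurable.ite ?_ measurable_const ?_
  · exact measurableSet_mem_config.preimage measurable_swap
  · refine measurable_tsum_finsets (M := ℝ) (fun p : Config d × Rd d => p.1) measurable_fst
      (fun q => G (insert q.1.2 q.2)) ?_
    exact hGm.comp (measurable_finset_insert.comp
      ((measurable_snd.comp measurable_fst).prodMk measurable_snd))

theorem glauber_eq (V : PairPotential d) (z : ℝ) (G : Finset (Rd d) → ℝ)
    {Λ : Set (Rd d)} (hΛ : IsCompact Λ)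
    (hG : ∀ η : Finset (Rd d), ¬ (η : Set (Rd d)) ⊆ Λ → G η = 0) (γ : Config d) :
    glauber V z (Ktrans G) γ =
      Ktrans (fun ζ => (ζ.card : ℝ) * G ζ) γ - z * ∫ x, birth V G γ x := by
  rw [glauber, tsum_erase G hΛ hG]
  simp only [birth]
  ring

theorem measurable_glauber (V : PairPotential d) (z : ℝ) (G : Finset (Rd d) → ℝ)
    (hGm : Measurable G) {Λ : Set (Rd d)} (hΛ : IsCompact Λ)
    (hG : ∀ η : Finset (Rd d), ¬ (η : Set (Rd d)) ⊆ Λ → G η = 0) :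
    Measurable (glauber V z (Ktrans G)) := by
  have e : glauber V z (Ktrans G) = fun γ =>
      Ktrans (fun ζ => (ζ.card : ℝ) * G ζ) γ - z * ∫ x, birth V G γ x :=
    funext (glauber_eq V z G hΛ hG)
  rw [e]
  refine Measurable.sub ?_ (Measurable.const_mul ?_ _)
  · refine measurable_tsum_finsets (M := ℝ) (fun p : Config d => p) measurable_id
      (fun q => (q.2.card : ℝ) * G q.2) ?_
    exact ((measurable_from_top.comp measurable_finset_card).comp measurable_snd).mul
      (hGm.comp measurable_snd)
  · exact ((measurable_birth V G hGm hΛ hG).stronglyMeasurable.integral_prod_right).measurable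

theorem measurable_hatH (V : PairPotential d) (z : ℝ) (G : Finset (Rd d) → ℝ)
    (hGm : Measurable G) {Λ : Set (Rd d)} (hΛ : IsCompact Λ)
    (hG : ∀ η : Finset (Rd d), ¬ (η : Set (Rd d)) ⊆ Λ → G η = 0) :
    Measurable (hatH V z G) := by
  have hg := measurable_glauber V z G hGm hΛ hG
  have hc : Measurable (fun η : Finset (Rd d) => (-1 : ℝ) ^ η.card) :=
    (measurable_from_top (f := fun n : ℕ => (-1 : ℝ) ^ n)).comp measurable_finset_card
  have e : hatH V z G = fun η => (-1 : ℝ) ^ η.card *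
      Ktrans (fun ξ => (-1 : ℝ) ^ ξ.card * glauber V z (Ktrans G) (Config.ofFinset ξ))
        (Config.ofFinset η) := by
    funext η
    rw [Ktrans_ofFinset, hatH, Finset.mul_sum]
    refine Finset.sum_congr rfl fun ξ hξ => ?_
    rw [← mul_assoc]
    congr 1
    have hle := Finset.card_le_card (Finset.mem_powerset.1 hξ)
    obtain ⟨m, hm⟩ := Nat.exists_eq_add_of_le hle
    rw [hm, Nat.add_sub_cancel_left, pow_add]
    have : ((-1 : ℝ) ^ ξ.card) * (-1) ^ ξ.card = 1 := by rw [← mul_pow]; simp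
    linear_combination (-(-1 : ℝ) ^ m) * this
  rw [e]
  refine hc.mul ?_
  refine measurable_tsum_finsets (M := ℝ) (fun p : Finset (Rd d) => Config.ofFinset p)
    measurable_ofFinset
    (fun q => (-1 : ℝ) ^ q.2.card * glauber V z (Ktrans G) (Config.ofFinset q.2)) ?_
  exact (hc.comp measurable_snd).mul (hg.comp (measurable_ofFinset.comp measurable_snd))

theorem enorm_Ktrans_le (F : Finset (Rd d) → ℝ) (γ : Config d) :
    ‖Ktrans F γ‖ₑ ≤ Ktrans (fun η => ‖F η‖ₑ) γ := by
  unfold Ktrans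
  exact enorm_tsum_le_tsum_enorm

theorem Ktrans_mono (F H : Finset (Rd d) → ℝ≥0∞) (h : ∀ η, F η ≤ H η) (γ : Config d) :
    Ktrans F γ ≤ Ktrans H γ := by
  unfold Ktrans
  exact ENNReal.tsum_le_tsum fun η => h _

theorem Ktrans_const_mul (c : ℝ≥0∞) (H : Finset (Rd d) → ℝ≥0∞) (γ : Config d) :
    Ktrans (fun η => c * H η) γ = c * Ktrans H γ := by
  unfold Ktrans
  exact ENNReal.tsum_mul_left

theorem measurable_gf_right (V : PairPotential d) {Λ : Set (Rd d)} (hΛ : MeasurableSet Λ)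
    (x : Rd d) : Measurable (gf V Λ x) := by
  have h : Measurable (fun y : Rd d => (x, y)) := measurable_prodMk_left
  have h2 := (measurable_gf V hΛ).comp h
  have e : (fun p : Rd d × Rd d => gf V Λ p.1 p.2) ∘ (fun y : Rd d => (x, y)) = gf V Λ x := by
    funext y
    rfl
  rwa [e] at h2

theorem measurable_eL_gf0 (V : PairPotential d) {Λ : Set (Rd d)} (hΛ : MeasurableSet Λ) :
    Measurable (fun q : Rd d × Finset (Rd d) => eL (gf V Λ q.1) q.2) :=
  measurable_eL_param (fun q : Rd d × Rd d => gf V Λ q.1 q.2) (measurable_gf V hΛ)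

theorem measurable_eL_gf (V : PairPotential d) {Λ : Set (Rd d)} (hΛ : MeasurableSet Λ) :
    Measurable (fun q : (Config d × Rd d) × Finset (Rd d) => eL (gf V Λ q.1.2) q.2) := by
  have h : Measurable (fun q : (Config d × Rd d) × Finset (Rd d) => (q.1.2, q.2)) :=
    (measurable_snd.comp measurable_fst).prodMk measurable_snd
  have h2 := (measurable_eL_gf0 V hΛ).comp h
  have e : (fun q : Rd d × Finset (Rd d) => eL (gf V Λ q.1) q.2) ∘
      (fun q : (Config d × Rd d) × Finset (Rd d) => (q.1.2, q.2)) =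
      fun q : (Config d × Rd d) × Finset (Rd d) => eL (gf V Λ q.1.2) q.2 := by
    funext q
    rfl
  rwa [e] at h2

theorem glauber_integrable (V : PairPotential d) (z : ℝ) (hz : 0 < z)
    (μ : Measure (Config d)) [IsProbabilityMeasure μ]
    (ρ : Measure (Finset (Rd d))) (hρ : IsCorrelationMeasure μ ρ)
    {Λ : Set (Rd d)} (hΛ : IsCompact Λ) (M : ℝ≥0∞) (hM : M < ⊤)
    (hb : ∀ g : Rd d → ℝ≥0∞, Measurable g →
      ∫⁻ y, g y ≤ 2 * (∫⁻ u : Rd d, ENNReal.ofReal |1 - expNegE (V.toFun u)|) + 3 * volume Λ →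
      ∫⁻ η, eL g η ∂ρ ≤ M)
    (G : Finset (Rd d) → ℝ) (hGm : Measurable G) (L : ℝ) (hL : ∀ η, |G η| ≤ L)
    (hG : ∀ η : Finset (Rd d), ¬ (η : Set (Rd d)) ⊆ Λ → G η = 0) :
    Integrable (glauber V z (Ktrans G)) μ := by
  have hΛm := hΛ.measurableSet
  refine ⟨(measurable_glauber V z G hGm hΛ hG).aestronglyMeasurable, ?_⟩
  have h3m : Measurable (fun y => 3 * ind Λ y) := (measurable_ind hΛm).const_mul 3
  have hgm : ∀ x, Measurable (gf V Λ x) := fun x =>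
    measurable_gf_right V hΛm x
  have hbound : ∀ γ, ‖glauber V z (Ktrans G) γ‖ₑ ≤
      ENNReal.ofReal L * Ktrans (eL (fun y => 3 * ind Λ y)) γ +
      ENNReal.ofReal z * ∫⁻ x, ENNReal.ofReal L * (ind Λ x * Ktrans (eL (gf V Λ x)) γ) := by
    intro γ
    rw [glauber_eq V z G hΛ hG]
    refine (enorm_sub_le).trans (add_le_add ?_ ?_)
    · refine (enorm_Ktrans_le _ γ).trans ?_
      rw [← Ktrans_const_mul]
      exact Ktrans_mono _ _ (cardG_bound G L hL hG) γ
    · rw [enorm_mul, Real.enorm_eq_ofReal hz.le]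
      gcongr
      refine (enorm_integral_le_lintegral_enorm _).trans ?_
      exact lintegral_mono fun x => Ktrans_D_bound V G hΛ L hL hG γ x
  have hKm : Measurable (fun p : Config d × Rd d =>
      ENNReal.ofReal L * (ind Λ p.2 * Ktrans (eL (gf V Λ p.2)) p.1)) := by
    refine Measurable.const_mul (((measurable_ind hΛm).comp measurable_snd).mul ?_) _
    refine measurable_tsum_finsets (M := ℝ≥0∞) (fun p : Config d × Rd d => p.1) measurable_fst
      (fun q => eL (gf V Λ q.1.2) q.2) ?_
    exact measurable_eL_gf V hΛm
  have hK1 : Measurable (fun γ : Config d => Ktrans (eL (fun y => 3 * ind Λ y)) γ) :=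
    measurable_tsum_finsets (M := ℝ≥0∞) (fun p : Config d => p) measurable_id
      (fun q => eL (fun y => 3 * ind Λ y) q.2) ((measurable_eL _ h3m).comp measurable_snd)
  have hKx : ∀ x, Measurable (fun γ : Config d => Ktrans (eL (gf V Λ x)) γ) := fun x =>
    measurable_tsum_finsets (M := ℝ≥0∞) (fun p : Config d => p) measurable_id
      (fun q => eL (gf V Λ x) q.2) ((measurable_eL _ (hgm x)).comp measurable_snd)
  show ∫⁻ γ, ‖glauber V z (Ktrans G) γ‖ₑ ∂μ < ⊤
  refine (lintegral_mono hbound).trans_lt ?_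
  rw [lintegral_add_left (hK1.const_mul _), lintegral_const_mul _ hK1,
    lintegral_Ktrans_eq μ ρ hρ _ (measurable_eL _ h3m),
    lintegral_const_mul _ hKm.lintegral_prod_right, lintegral_lintegral_swap hKm.aemeasurable]
  have h1 : ∫⁻ η, eL (fun y => 3 * ind Λ y) η ∂ρ ≤ M := by
    refine hb _ h3m ?_
    rw [lintegral_const_mul _ (measurable_ind hΛm), lintegral_ind hΛm]
    exact le_add_self
  have h2 : ∫⁻ x, ∫⁻ γ, ENNReal.ofReal L * (ind Λ x * Ktrans (eL (gf V Λ x)) γ) ∂μ ≤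
      ENNReal.ofReal L * (volume Λ * M) := by
    calc _ ≤ ∫⁻ x, ENNReal.ofReal L * (ind Λ x * M) := by
          refine lintegral_mono fun x => ?_
          rw [lintegral_const_mul _ ((hKx x).const_mul _), lintegral_const_mul _ (hKx x),
            lintegral_Ktrans_eq μ ρ hρ _ (measurable_eL _ (hgm x))]
          gcongr
          exact hb _ (hgm x) (lintegral_gf V hΛm x).le
      _ = _ := by
          rw [lintegral_const_mul _ ((measurable_ind hΛm).mul_const _),
            lintegral_mul_const _ (measurable_ind hΛm), lintegral_ind hΛm]
  refine (add_le_add (mul_le_mul_right h1 _) (mul_le_mul_right h2 _)).trans_lt ?_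
  have hv : volume Λ < ⊤ := hΛ.measure_lt_top
  exact ENNReal.add_lt_top.2 ⟨ENNReal.mul_lt_top ENNReal.ofReal_lt_top hM,
    ENNReal.mul_lt_top ENNReal.ofReal_lt_top
      (ENNReal.mul_lt_top ENNReal.ofReal_lt_top (ENNReal.mul_lt_top hv hM))⟩

end Final


section HatH

variable {d : ℕ}

theorem birth_finset_mem (V : PairPotential d) (G : Finset (Rd d) → ℝ) {Λ : Set (Rd d)}
    (hΛ : IsCompact Λ) (hG : ∀ η : Finset (Rd d), ¬ (η : Set (Rd d)) ⊆ Λ → G η = 0)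
    (ξ : Finset (Rd d)) (x : Rd d) (hx : x ∈ ξ) : birth V G (Config.ofFinset ξ) x = 0 := by
  have hx' : x ∈ (Config.ofFinset ξ).1 := Finset.mem_coe.2 hx
  rw [birth, Ktrans_insert_sub G hΛ hG, if_pos hx', mul_zero]

theorem birth_finset_not_mem (V : PairPotential d) (G : Finset (Rd d) → ℝ) {Λ : Set (Rd d)}
    (hΛ : IsCompact Λ) (hG : ∀ η : Finset (Rd d), ¬ (η : Set (Rd d)) ⊆ Λ → G η = 0)
    (ξ : Finset (Rd d)) (x : Rd d) (hx : x ∉ ξ) : birth V G (Config.ofFinset ξ) x =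
      (∏ y ∈ ξ, bw V x y) * ∑ ζ ∈ ξ.powerset, G (insert x ζ) := by
  have hx' : x ∉ (Config.ofFinset ξ).1 := fun h => hx (Finset.mem_coe.1 h)
  rw [birth, Ktrans_insert_sub G hΛ hG, if_neg hx', Ktrans_ofFinset]
  congr 1
  exact expNegRelEnergy_finset V x ξ hx

theorem bw_nonneg (V : PairPotential d) (x y : Rd d) : 0 ≤ bw V x y := by
  rw [bw]; exact expNegE_nonneg _

theorem birth_finset_integrable (V : PairPotential d) (B : ℝ) (hS : Stable V B)
    (G : Finset (Rd d) → ℝ) (hGm : Measurable G) {Λ : Set (Rd d)}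
    (hΛ : IsCompact Λ) (L : ℝ) (hL : ∀ η, |G η| ≤ L)
    (hG : ∀ η : Finset (Rd d), ¬ (η : Set (Rd d)) ⊆ Λ → G η = 0)
    (ξ : Finset (Rd d)) : Integrable (birth V G (Config.ofFinset ξ)) := by
  have hm : Measurable (birth V G (Config.ofFinset ξ)) := by
    have h : Measurable (fun x : Rd d => (Config.ofFinset ξ, x)) := measurable_prodMk_left
    have h2 := (measurable_birth V G hGm hΛ hG).comp h
    have e : (fun p : Config d × Rd d => birth V G p.1 p.2) ∘
        (fun x : Rd d => (Config.ofFinset ξ, x)) = birth V G (Config.ofFinset ξ) := by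
      funext x
      rfl
    rwa [e] at h2
  refine ⟨hm.aestronglyMeasurable, ?_⟩
  set c : ℝ≥0∞ := ENNReal.ofReal (Real.exp (2 * B)) ^ ξ.card * (2 ^ ξ.card * ENNReal.ofReal L)
    with hc
  have hc_top : c < ⊤ := by
    refine ENNReal.mul_lt_top (ENNReal.pow_lt_top ENNReal.ofReal_lt_top)
      (ENNReal.mul_lt_top (ENNReal.pow_lt_top (by norm_num)) ENNReal.ofReal_lt_top)
  have hb : ∀ x, ‖birth V G (Config.ofFinset ξ) x‖ₑ ≤ c * ind Λ x := by
    intro x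
    by_cases hx : x ∈ ξ
    · rw [birth_finset_mem V G hΛ hG ξ x hx]; simp
    · rw [birth_finset_not_mem V G hΛ hG ξ x hx, enorm_mul]
      have h1 : ‖∏ y ∈ ξ, bw V x y‖ₑ ≤ ENNReal.ofReal (Real.exp (2 * B)) ^ ξ.card := by
        rw [Real.enorm_eq_ofReal (Finset.prod_nonneg fun y _ => bw_nonneg V x y),
          ENNReal.ofReal_prod_of_nonneg fun y _ => bw_nonneg V x y]
        refine Finset.prod_le_pow_card _ _ _ fun y hy => ENNReal.ofReal_le_ofReal ?_
        refine bw_le V B hS x y ?_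
        rintro rfl
        exact hx hy
      have h2 : ‖∑ ζ ∈ ξ.powerset, G (insert x ζ)‖ₑ ≤
          2 ^ ξ.card * (ENNReal.ofReal L * ind Λ x) := by
        calc _ ≤ ∑ ζ ∈ ξ.powerset, ‖G (insert x ζ)‖ₑ := enorm_sum_le _ _
          _ ≤ ∑ ζ ∈ ξ.powerset, ENNReal.ofReal L * ind Λ x := by
              refine Finset.sum_le_sum fun η _ => (G_insert_bound G L hL hG x η).trans ?_
              refine mul_le_of_le_one_right' ?_
              exact Finset.prod_le_one' fun y _ => ind_le_one Λ y
          _ = _ := by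
              rw [Finset.sum_const, Finset.card_powerset, nsmul_eq_mul]
              push_cast; rfl
      calc _ ≤ ENNReal.ofReal (Real.exp (2 * B)) ^ ξ.card *
            (2 ^ ξ.card * (ENNReal.ofReal L * ind Λ x)) := mul_le_mul' h1 h2
        _ = _ := by rw [hc]; ring
  show ∫⁻ x, ‖birth V G (Config.ofFinset ξ) x‖ₑ < ⊤
  refine (lintegral_mono hb).trans_lt ?_
  rw [lintegral_const_mul _ (measurable_ind hΛ.measurableSet), lintegral_ind hΛ.measurableSet]
  exact ENNReal.mul_lt_top hc_top hΛ.measure_lt_top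

/-- The Möbius inverse of the birth integrand. -/
noncomputable def birthT (V : PairPotential d) (G : Finset (Rd d) → ℝ) (η : Finset (Rd d))
    (x : Rd d) : ℝ :=
  ∑ ξ ∈ η.powerset, (-1 : ℝ) ^ (η.card - ξ.card) * birth V G (Config.ofFinset ξ) x

theorem hatH_eq (V : PairPotential d) (B : ℝ) (hS : Stable V B) (z : ℝ)
    (G : Finset (Rd d) → ℝ) (hGm : Measurable G) {Λ : Set (Rd d)}
    (hΛ : IsCompact Λ) (L : ℝ) (hL : ∀ η, |G η| ≤ L)
    (hG : ∀ η : Finset (Rd d), ¬ (η : Set (Rd d)) ⊆ Λ → G η = 0)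
    (η : Finset (Rd d)) :
    hatH V z G η = (η.card : ℝ) * G η - z * ∫ x, birthT V G η x := by
  have hi : ∀ ξ ∈ η.powerset, Integrable (fun x =>
      (-1 : ℝ) ^ (η.card - ξ.card) * birth V G (Config.ofFinset ξ) x) := fun ξ _ =>
    (birth_finset_integrable V B hS G hGm hΛ L hL hG ξ).const_mul _
  unfold birthT
  rw [integral_finsetSum _ hi, hatH]
  simp only [glauber_eq V z G hΛ hG, Ktrans_ofFinset, integral_const_mul, mul_sub,
    Finset.sum_sub_distrib]
  rw [mobius_one η (fun ζ => (ζ.card : ℝ) * G ζ), Finset.mul_sum]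
  congr 1
  refine Finset.sum_congr rfl fun ξ _ => ?_
  ring

theorem enorm_bw (V : PairPotential d) (x y : Rd d) : ‖bw V x y‖ₑ ≤ 1 + mf V x y := by
  rw [Real.enorm_eq_ofReal (bw_nonneg V x y)]
  exact ofReal_bw_le V x y

theorem enorm_bw_sub (V : PairPotential d) (x y : Rd d) : ‖bw V x y - 1‖ₑ = mf V x y := by
  rw [Real.enorm_eq_ofReal_abs, mf, abs_sub_comm]

theorem gf_step (V : PairPotential d) (Λ : Set (Rd d)) (x y : Rd d) :
    ind Λ y * (1 + mf V x y) + mf V x y ≤ gf V Λ x y := by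
  rw [gf]
  calc ind Λ y * (1 + mf V x y) + mf V x y
      = ind Λ y * 1 + (ind Λ y * mf V x y + mf V x y) := by ring
    _ ≤ ind Λ y * 3 + (1 * mf V x y + mf V x y) := by
        gcongr
        · norm_num
        · exact ind_le_one Λ y
    _ = _ := by ring

theorem enorm_prod_real {α : Type*} (s : Finset α) (f : α → ℝ) :
    ‖∏ y ∈ s, f y‖ₑ = ∏ y ∈ s, ‖f y‖ₑ := by
  induction s using Finset.induction_on with
  | empty => simp
  | insert a s ha ih => rw [Finset.prod_insert ha, Finset.prod_insert ha, enorm_mul, ih]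

theorem birthT_bound0 (V : PairPotential d) (G : Finset (Rd d) → ℝ) {Λ : Set (Rd d)}
    (hΛ : IsCompact Λ) (L : ℝ) (hL : ∀ η, |G η| ≤ L)
    (hG : ∀ η : Finset (Rd d), ¬ (η : Set (Rd d)) ⊆ Λ → G η = 0)
    (η : Finset (Rd d)) (x : Rd d) (hx : x ∉ η) :
    ‖birthT V G η x‖ₑ ≤ ENNReal.ofReal L * (ind Λ x * eL (gf V Λ x) η) := by
  have e : birthT V G η x = ∑ ζ ∈ η.powerset, G (insert x ζ) * (∏ y ∈ ζ, bw V x y) *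
      ∏ y ∈ η \ ζ, (bw V x y - 1) := by
    have h := mobius_prod (bw V x) η (fun ζ => G (insert x ζ))
    refine Eq.trans ?_ (h.trans (Finset.sum_congr rfl fun ζ _ => by congr!))
    rw [birthT]
    refine Finset.sum_congr rfl fun ξ hξ => ?_
    rw [birth_finset_not_mem V G hΛ hG ξ x fun h => hx (Finset.mem_powerset.1 hξ h)]
  rw [e]
  calc _ ≤ ∑ ζ ∈ η.powerset, ‖G (insert x ζ) * (∏ y ∈ ζ, bw V x y) *
        ∏ y ∈ η \ ζ, (bw V x y - 1)‖ₑ := enorm_sum_le _ _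
    _ ≤ ∑ ζ ∈ η.powerset, ENNReal.ofReal L * ind Λ x *
        ((∏ y ∈ ζ, ind Λ y * (1 + mf V x y)) * ∏ y ∈ η \ ζ, mf V x y) := by
        refine Finset.sum_le_sum fun ζ _ => ?_
        rw [enorm_mul, enorm_mul, enorm_prod_real, enorm_prod_real]
        simp only [enorm_bw_sub]
        have h1 := G_insert_bound G L hL hG x ζ
        have h2 : ∏ y ∈ ζ, ‖bw V x y‖ₑ ≤ ∏ y ∈ ζ, (1 + mf V x y) :=
          Finset.prod_le_prod' fun y _ => enorm_bw V x y
        calc _ ≤ ENNReal.ofReal L * ind Λ x * eL (ind Λ) ζ * (∏ y ∈ ζ, (1 + mf V x y)) *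
              ∏ y ∈ η \ ζ, mf V x y := by gcongr
          _ = _ := by rw [Finset.prod_mul_distrib, eL]; ring
    _ = ENNReal.ofReal L * ind Λ x * ∏ y ∈ η, (ind Λ y * (1 + mf V x y) + mf V x y) := by
        rw [← Finset.mul_sum, Finset.prod_add]
    _ ≤ ENNReal.ofReal L * ind Λ x * eL (gf V Λ x) η := by
        gcongr
        exact Finset.prod_le_prod' fun y _ => gf_step V Λ x y
    _ = _ := by ring

theorem birthT_bound (V : PairPotential d) (G : Finset (Rd d) → ℝ) {Λ : Set (Rd d)}
    (hΛ : IsCompact Λ) (L : ℝ) (hL : ∀ η, |G η| ≤ L)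
    (hG : ∀ η : Finset (Rd d), ¬ (η : Set (Rd d)) ⊆ Λ → G η = 0)
    (η : Finset (Rd d)) (x : Rd d) :
    ‖birthT V G η x‖ₑ ≤ ENNReal.ofReal L * (ind Λ x * eL (gf V Λ x) η) := by
  by_cases hx : x ∈ η
  swap
  · exact birthT_bound0 V G hΛ L hL hG η x hx
  obtain ⟨η', hx', rfl⟩ : ∃ η', x ∉ η' ∧ insert x η' = η :=
    ⟨η.erase x, Finset.notMem_erase x η, Finset.insert_erase hx⟩
  have e : birthT V G (insert x η') x = - birthT V G η' x := by
    rw [birthT, Finset.sum_powerset_insert hx', birthT, ← Finset.sum_neg_distrib]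
    have h0 : ∑ ξ ∈ η'.powerset, (-1 : ℝ) ^ ((insert x η').card - (insert x ξ).card) *
        birth V G (Config.ofFinset (insert x ξ)) x = 0 := by
      refine Finset.sum_eq_zero fun ξ _ => ?_
      rw [birth_finset_mem V G hΛ hG _ x (Finset.mem_insert_self x ξ), mul_zero]
    rw [h0, add_zero]
    refine Finset.sum_congr rfl fun ξ hξ => ?_
    have hle := Finset.card_le_card (Finset.mem_powerset.1 hξ)
    rw [Finset.card_insert_of_notMem hx', Nat.sub_add_comm hle, pow_succ]
    ring
  rw [e, enorm_neg]
  refine (birthT_bound0 V G hΛ L hL hG η' x hx').trans ?_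
  by_cases hxΛ : x ∈ Λ
  · gcongr
    rw [eL, eL, Finset.prod_insert hx']
    have : 1 ≤ gf V Λ x x := by
      rw [gf, ind_of_mem hxΛ, mul_one]
      exact le_trans (by norm_num) le_add_self
    exact le_mul_of_one_le_left' this
  · rw [ind_of_not_mem hxΛ]; simp

theorem hatH_integrable0 (V : PairPotential d) (B : ℝ) (hS : Stable V B) (z : ℝ) (hz : 0 < z)
    (ρ : Measure (Finset (Rd d))) [SFinite ρ]
    {Λ : Set (Rd d)} (hΛ : IsCompact Λ) (M : ℝ≥0∞) (hM : M < ⊤)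
    (hb : ∀ g : Rd d → ℝ≥0∞, Measurable g →
      ∫⁻ y, g y ≤ 2 * (∫⁻ u : Rd d, ENNReal.ofReal |1 - expNegE (V.toFun u)|) + 3 * volume Λ →
      ∫⁻ η, eL g η ∂ρ ≤ M)
    (G : Finset (Rd d) → ℝ) (hGm : Measurable G) (L : ℝ) (hL : ∀ η, |G η| ≤ L)
    (hG : ∀ η : Finset (Rd d), ¬ (η : Set (Rd d)) ⊆ Λ → G η = 0) :
    Integrable (hatH V z G) ρ := by
  have hΛm := hΛ.measurableSet
  refine ⟨(measurable_hatH V z G hGm hΛ hG).aestronglyMeasurable, ?_⟩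
  have h3m : Measurable (fun y => 3 * ind Λ y) := (measurable_ind hΛm).const_mul 3
  have hgm : ∀ x, Measurable (gf V Λ x) := fun x => measurable_gf_right V hΛm x
  have hbound : ∀ η, ‖hatH V z G η‖ₑ ≤
      ENNReal.ofReal L * eL (fun y => 3 * ind Λ y) η +
      ENNReal.ofReal z * ∫⁻ x, ENNReal.ofReal L * (ind Λ x * eL (gf V Λ x) η) := by
    intro η
    rw [hatH_eq V B hS z G hGm hΛ L hL hG]
    refine (enorm_sub_le).trans (add_le_add ?_ ?_)
    · exact cardG_bound G L hL hG η
    · rw [enorm_mul, Real.enorm_eq_ofReal hz.le]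
      gcongr
      refine (enorm_integral_le_lintegral_enorm _).trans ?_
      exact lintegral_mono fun x => birthT_bound V G hΛ L hL hG η x
  have hKm : Measurable (fun p : Finset (Rd d) × Rd d =>
      ENNReal.ofReal L * (ind Λ p.2 * eL (gf V Λ p.2) p.1)) := by
    refine Measurable.const_mul (((measurable_ind hΛm).comp measurable_snd).mul ?_) _
    exact (measurable_eL_gf0 V hΛm).comp measurable_swap
  have hK1 : Measurable (eL (fun y => 3 * ind Λ y)) := measurable_eL _ h3m
  have hKx : ∀ x, Measurable (eL (gf V Λ x)) := fun x => measurable_eL _ (hgm x)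
  show ∫⁻ η, ‖hatH V z G η‖ₑ ∂ρ < ⊤
  refine (lintegral_mono hbound).trans_lt ?_
  rw [lintegral_add_left (hK1.const_mul _), lintegral_const_mul _ hK1,
    lintegral_const_mul _ hKm.lintegral_prod_right, lintegral_lintegral_swap hKm.aemeasurable]
  have h1 : ∫⁻ η, eL (fun y => 3 * ind Λ y) η ∂ρ ≤ M := by
    refine hb _ h3m ?_
    rw [lintegral_const_mul _ (measurable_ind hΛm), lintegral_ind hΛm]
    exact le_add_self
  have h2 : ∫⁻ x, ∫⁻ η, ENNReal.ofReal L * (ind Λ x * eL (gf V Λ x) η) ∂ρ ≤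
      ENNReal.ofReal L * (volume Λ * M) := by
    calc _ ≤ ∫⁻ x, ENNReal.ofReal L * (ind Λ x * M) := by
          refine lintegral_mono fun x => ?_
          rw [lintegral_const_mul _ ((hKx x).const_mul _), lintegral_const_mul _ (hKx x)]
          gcongr
          exact hb _ (hgm x) (lintegral_gf V hΛm x).le
      _ = _ := by
          rw [lintegral_const_mul _ ((measurable_ind hΛm).mul_const _),
            lintegral_mul_const _ (measurable_ind hΛm), lintegral_ind hΛm]
  refine (add_le_add (mul_le_mul_right h1 _) (mul_le_mul_right h2 _)).trans_lt ?_
  have hv : volume Λ < ⊤ := hΛ.measure_lt_top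
  exact ENNReal.add_lt_top.2 ⟨ENNReal.mul_lt_top ENNReal.ofReal_lt_top hM,
    ENNReal.mul_lt_top ENNReal.ofReal_lt_top
      (ENNReal.mul_lt_top ENNReal.ofReal_lt_top (ENNReal.mul_lt_top hv hM))⟩

end HatH

/-- **Proposition.** For a pair potential satisfying (I) and (S) and a measure
`μ ∈ M¹_fm(Γ)` whose correlation measure has density `k_μ` w.r.t. `λ_z` satisfying
the Ruelle bound, `Ĥ(B_bs(Γ₀)) ⊂ L¹(Γ₀,ρ_μ)`; consequently the Glauber generator `H`
maps `FP_bc(Γ) = K(B_bs(Γ₀))` into `L¹(Γ,μ)`. -/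
theorem hatH_integrable {d : ℕ} (V : PairPotential d) (B : ℝ)
    (hS : Stable V B) (hI : CondI V) (z : ℝ) (hz : 0 < z)
    (μ : Measure (Config d)) (hμ : HasFiniteLocalMoments μ)
    (ρ : Measure (Finset (Rd d))) (hρ : IsCorrelationMeasure μ ρ)
    (k : Finset (Rd d) → ℝ) (hk_meas : Measurable k) (hk_nonneg : ∀ η, 0 ≤ k η)
    (hk_dens : ρ = (lambdaLP d z).withDensity fun η => ENNReal.ofReal (k η))
    (hRB : ∃ C > 0, ∀ η : Finset (Rd d), k η ≤ C ^ η.card) :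
    (∀ G : Finset (Rd d) → ℝ, BddSupp G → Integrable (hatH V z G) ρ) ∧
      (∀ G : Finset (Rd d) → ℝ, BddSupp G →
        Integrable (glauber V z (Ktrans G)) μ) := by
  haveI := hμ.1
  haveI : SFinite ρ := by
    haveI : SFinite (lambdaLP d z) := by unfold lambdaLP; infer_instance
    rw [hk_dens]
    infer_instance
  obtain ⟨C, hC, hCb⟩ := hRB
  have key : ∀ Λ : Set (Rd d), IsCompact Λ → ∃ M : ℝ≥0∞, M < ⊤ ∧
      ∀ g : Rd d → ℝ≥0∞, Measurable g →
      ∫⁻ y, g y ≤ 2 * (∫⁻ u : Rd d, ENNReal.ofReal |1 - expNegE (V.toFun u)|) + 3 * volume Λ →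
      ∫⁻ η, eL g η ∂ρ ≤ M := by
    intro Λ hΛ
    refine lintegral_eL_le z hz ρ k hk_meas hk_dens C hC hCb _ ?_
    have hv : volume Λ < ⊤ := hΛ.measure_lt_top
    exact ENNReal.add_lt_top.2 ⟨ENNReal.mul_lt_top (by norm_num) hI,
      ENNReal.mul_lt_top (by norm_num) hv⟩
  constructor
  · rintro G ⟨hGm, L, N, Λ, hΛ, hL, hsupp⟩
    obtain ⟨M, hM, hb⟩ := key Λ hΛ
    exact hatH_integrable0 V B hS z hz ρ hΛ M hM hb G hGm L hL
      fun η hη => hsupp η fun h => hη h.1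
  · rintro G ⟨hGm, L, N, Λ, hΛ, hL, hsupp⟩
    obtain ⟨M, hM, hb⟩ := key Λ hΛ
    exact glauber_integrable V z hz μ ρ hρ hΛ M hM hb G hGm L hL
      fun η hη => hsupp η fun h => hη h.1
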